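/- Let M be a (σ,∇)-module over 𝓔^† which is a sub-(σ,∇)-module of M'⊗_{𝓔_+}𝓔^†, where M' is a (σ,∇)-module over 𝓔_+. Then there is a sub-(σ,∇)-module M'' of M' over 𝓔_+ such that M is equal to M''⊗_{𝓔_+}𝓔^† inside M'⊗_{𝓔_+}𝓔^†. -/

import Mathlib

/-!
STATEMENT 6: Let `M` be a `(σ,∇)`-module over `𝓔^† = Γ^†[1/p]` which is a
sub-`(σ,∇)`-module of `M'⊗_{𝓔_+}𝓔^†`, where `M'` is a `(σ,∇)`-module over
`𝓔_+ = Γ_+[1/p]`.  Then there is a sub-`(σ,∇)`-module `M''` of `M'` over `𝓔_+`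
such that `M = M''⊗_{𝓔_+}𝓔^†` inside `M'⊗_{𝓔_+}𝓔^†`.

As everything is finite free (𝓔^† is a field) we state this concretely:
`M'` is given by matrices `Φ', N'` over `𝓔_+` (with `Φ'` invertible up to a
power of `p` and the `(σ,∇)`-compatibility `dΦ' + N'·Φ' = c·(Φ'·σ(N'))`,
`c = q·u^{q−1}`, `q = p^f`); a rank-`l` sub-`(σ,∇)`-module of `M'⊗𝓔^†` is the
column span of an `n×l` matrix `V` over `𝓔^†` of rank `l` (i.e. admitting a
left inverse over `𝓔^†`) satisfying `Φ'·σ(V) = V·A` with `A` invertible up to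
a power of `p` over `𝓔^†`, and `dV + N'·V = V·C` over `𝓔^†`.  The conclusion
produces a matrix `W` with entries in `𝓔_+` with the analogous stability
properties over `𝓔_+`, whose `𝓔^†`-column span equals that of `V`, i.e.
`V = W·G` for an invertible `l×l` matrix `G` over `𝓔^†`.

`Γ` is the `p`-adic completion of `𝒪((u))` (`𝒪 = W(k)`) and the subring `Γ^†`
is carved out by the overconvergence condition `liminf_{i→−∞} v_p(x_i)/(−i) > 0`
on the coefficients, which are axiomatized as in the other statements.
-/

set_option synthInstance.maxHeartbeats 1000000
set_option maxHeartbeats 4000000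

noncomputable section

/-- `Γ`: the `p`-adic completion of the Laurent series ring `𝒪((u))`, `𝒪 = W(k)`. -/
abbrev GammaRing (p : ℕ) [Fact p.Prime] (k : Type*) [Field k] [CharP k p] : Type _ :=
  AdicCompletion (Ideal.span {(p : LaurentSeries (WittVector p k))})
    (LaurentSeries (WittVector p k))

/-- `𝓔 = Γ[1/p]`, the fraction field of `Γ` (ambient ring for `𝓔_+` and `𝓔^†`). -/
abbrev ERing (p : ℕ) [Fact p.Prime] (k : Type*) [Field k] [CharP k p] : Type _ :=
  FractionRing (GammaRing p k)

/-- The canonical map `Γ → 𝓔`. -/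
abbrev gammaToE (p : ℕ) [Fact p.Prime] (k : Type*) [Field k] [CharP k p] :
    GammaRing p k →+* ERing p k :=
  algebraMap (GammaRing p k) (ERing p k)

/-- The canonical map `𝒪((u)) → Γ`. -/
abbrev laurentToGamma (p : ℕ) [Fact p.Prime] (k : Type*) [Field k] [CharP k p] :
    LaurentSeries (WittVector p k) →+* GammaRing p k :=
  algebraMap (LaurentSeries (WittVector p k)) (GammaRing p k)

/-- The canonical map `Γ_+ = 𝒪[[u]] → 𝓔`. -/
abbrev psToE (p : ℕ) [Fact p.Prime] (k : Type*) [Field k] [CharP k p] :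
    PowerSeries (WittVector p k) →+* ERing p k :=
  ((gammaToE p k).comp (laurentToGamma p k)).comp
    (HahnSeries.ofPowerSeries ℤ (WittVector p k))

/-- The canonical map `𝒪 → 𝓔` (constant series). -/
abbrev wittToE (p : ℕ) [Fact p.Prime] (k : Type*) [Field k] [CharP k p] :
    WittVector p k →+* ERing p k :=
  ((gammaToE p k).comp (laurentToGamma p k)).comp
    (HahnSeries.C : WittVector p k →+* LaurentSeries (WittVector p k))

/-- The element `u` of `𝓔`. -/
def uE (p : ℕ) [Fact p.Prime] (k : Type*) [Field k] [CharP k p] : ERing p k :=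
  (gammaToE p k) (laurentToGamma p k (HahnSeries.single (1 : ℤ) (1 : WittVector p k)))

/-- `𝓔_+ = Γ_+[1/p]` inside `𝓔`. -/
def EPlusSet (p : ℕ) [Fact p.Prime] (k : Type*) [Field k] [CharP k p] :
    Set (ERing p k) :=
  {x | ∃ (g : PowerSeries (WittVector p k)) (j : ℕ), (p : ERing p k) ^ j * x = psToE p k g}

/-- The overconvergent subring `Γ^†` of `Γ`, as a set (in terms of the coefficient
structure `coeff`): `liminf_{i→−∞} v_p(x_i)/(−i) > 0`. -/
def GammaDagSet (p : ℕ) [Fact p.Prime] (k : Type*) [Field k] [CharP k p]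
    (coeff : ℤ → GammaRing p k →+ WittVector p k) : Set (GammaRing p k) :=
  {x | ∃ m : ℕ, 0 < m ∧ ∃ N : ℤ, ∀ i ≤ N,
    (p : WittVector p k) ^ ((-i).toNat / m) ∣ coeff i x}

/-- `𝓔^† = Γ^†[1/p]` inside `𝓔`. -/
def EDagSet (p : ℕ) [Fact p.Prime] (k : Type*) [Field k] [CharP k p]
    (coeff : ℤ → GammaRing p k →+ WittVector p k) : Set (ERing p k) :=
  {x | ∃ (y : GammaRing p k) (j : ℕ),
    y ∈ GammaDagSet p k coeff ∧ (p : ERing p k) ^ j * x = gammaToE p k y}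

set_option linter.unusedSectionVars false

set_option linter.unusedSectionVars false
namespace Rob

open Filter Topology

section basic
variable {K : Type*} [NormedField K]

def Conv (r : ℝ) (x : ℤ → K) : Prop := Summable fun i => ‖x i‖ * r ^ i

def IsRob (x : ℤ → K) : Prop := ∃ ρ : ℝ, 0 < ρ ∧ ρ < 1 ∧ ∀ r, ρ < r → r < 1 → Conv r x

def conv (x y : ℤ → K) (n : ℤ) : K := ∑' i, x i * y (n - i)

def shearEquiv : ℤ × ℤ ≃ ℤ × ℤ where
  toFun p := (p.1, p.2 - p.1)
  invFun p := (p.1, p.1 + p.2)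
  left_inv p := by ext <;> simp
  right_inv p := by ext <;> simp

theorem Conv.shear {r : ℝ} (hr : 0 < r) {x y : ℤ → K} (hx : Conv r x) (hy : Conv r y) :
    Summable fun p : ℤ × ℤ => (‖x p.1‖ * ‖y (p.2 - p.1)‖) * r ^ p.2 := by
  have h := Summable.mul_of_nonneg hx hy (fun i => by positivity) (fun i => by positivity)
  have h2 := (shearEquiv.summable_iff).2 h
  refine h2.congr fun p => ?_
  simp only [Function.comp, shearEquiv, Equiv.coe_fn_mk]
  have : r ^ p.2 = r ^ p.1 * r ^ (p.2 - p.1) := by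
    rw [← zpow_add₀ hr.ne']; congr 1; ring
  rw [this]; ring

theorem Conv.summable_norm {r : ℝ} (hr : 0 < r) {x y : ℤ → K} (hx : Conv r x) (hy : Conv r y)
    (n : ℤ) : Summable fun i => ‖x i * y (n - i)‖ := by
  have h := (hx.shear hr hy).prod_symm.prod_factor n
  have h3 := h.mul_right ((r ^ n)⁻¹)
  refine h3.congr fun i => ?_
  have : r ^ n ≠ 0 := (zpow_pos hr n).ne'
  simp only [Prod.swap_prod_mk]
  rw [norm_mul, mul_assoc, mul_inv_cancel₀ this, mul_one]

theorem Conv.summable [CompleteSpace K] {r : ℝ} (hr : 0 < r) {x y : ℤ → K} (hx : Conv r x)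
    (hy : Conv r y) (n : ℤ) : Summable fun i => x i * y (n - i) :=
  (hx.summable_norm hr hy n).of_norm

theorem Conv.mul {r : ℝ} (hr : 0 < r) {x y : ℤ → K} (hx : Conv r x) (hy : Conv r y) :
    Conv r (conv x y) := by
  have h := (hx.shear hr hy).prod_symm.prod
  refine Summable.of_nonneg_of_le (fun i => by positivity) (fun n => ?_) h
  have h1 := hx.summable_norm hr hy n
  have h2 : ‖conv x y n‖ ≤ ∑' i, ‖x i * y (n - i)‖ := norm_tsum_le_tsum_norm h1
  calc ‖conv x y n‖ * r ^ n ≤ (∑' i, ‖x i * y (n - i)‖) * r ^ n := by gcongr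
    _ = _ := by
      rw [← tsum_mul_right]
      simp

theorem Conv.add {r : ℝ} (hr : 0 < r) {x y : ℤ → K} (hx : Conv r x) (hy : Conv r y) :
    Conv r (x + y) := by
  refine Summable.of_nonneg_of_le (fun i => by positivity) (fun n => ?_) (Summable.add hx hy)
  rw [← add_mul]
  gcongr
  exact norm_add_le _ _

theorem IsRob.two {x y : ℤ → K} (hx : IsRob x) (hy : IsRob y) : ∃ ρ : ℝ, 0 < ρ ∧ ρ < 1 ∧
    ∀ r, ρ < r → r < 1 → Conv r x ∧ Conv r y := by
  obtain ⟨a, ha, ha1, h⟩ := hx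
  obtain ⟨b, hb, hb1, h'⟩ := hy
  exact ⟨max a b, lt_max_of_lt_left ha, max_lt ha1 hb1, fun r hr hr1 =>
    ⟨h r ((le_max_left _ _).trans_lt hr) hr1, h' r ((le_max_right _ _).trans_lt hr) hr1⟩⟩

theorem IsRob.exists_conv {x y : ℤ → K} (hx : IsRob x) (hy : IsRob y) :
    ∃ r : ℝ, 0 < r ∧ Conv r x ∧ Conv r y := by
  obtain ⟨a, ha, ha1, h⟩ := hx.two hy
  obtain ⟨r, h1, h2⟩ := exists_between ha1
  exact ⟨r, ha.trans h1, h r h1 h2⟩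

theorem IsRob.exists_conv3 {x y z : ℤ → K} (hx : IsRob x) (hy : IsRob y) (hz : IsRob z) :
    ∃ r : ℝ, 0 < r ∧ Conv r x ∧ Conv r y ∧ Conv r z := by
  obtain ⟨a, ha, ha1, h⟩ := hx.two hy
  obtain ⟨b, hb, hb1, h'⟩ := hz
  obtain ⟨r, h1, h2⟩ := exists_between (max_lt ha1 hb1)
  have e1 := (le_max_left _ _).trans_lt h1
  have e2 := (le_max_right _ _).trans_lt h1
  exact ⟨r, ha.trans e1, (h r e1 h2).1, (h r e1 h2).2, h' r e2 h2⟩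

theorem IsRob.mul {x y : ℤ → K} (hx : IsRob x) (hy : IsRob y) : IsRob (conv x y) := by
  obtain ⟨a, ha, ha1, h⟩ := hx.two hy
  exact ⟨a, ha, ha1, fun r h1 h2 => (h r h1 h2).1.mul (ha.trans h1) (h r h1 h2).2⟩

theorem IsRob.add {x y : ℤ → K} (hx : IsRob x) (hy : IsRob y) : IsRob (x + y) := by
  obtain ⟨a, ha, ha1, h⟩ := hx.two hy
  exact ⟨a, ha, ha1, fun r h1 h2 => (h r h1 h2).1.add (ha.trans h1) (h r h1 h2).2⟩

theorem conv_comm (x y : ℤ → K) : conv x y = conv y x := by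
  ext n
  unfold conv
  rw [← (Equiv.subLeft n).tsum_eq]
  simp [mul_comm]

theorem conv_assoc [CompleteSpace K] {x y z : ℤ → K} (hx : IsRob x) (hy : IsRob y)
    (hz : IsRob z) : conv (conv x y) z = conv x (conv y z) := by
  ext n
  obtain ⟨r, hr, cx, cy, cz⟩ := hx.exists_conv3 hy hz
  -- terms x i * y (k - i) * z (n - k)
  have e1 : conv (conv x y) z n = ∑' k, ∑' i, x i * y (k - i) * z (n - k) := by
    unfold conv
    refine tsum_congr fun k => ?_
    rw [tsum_mul_right]
  have e2 : conv x (conv y z) n = ∑' i, ∑' k, x i * y (k - i) * z (n - k) := by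
    unfold conv
    refine tsum_congr fun i => ?_
    rw [← tsum_mul_left, ← (Equiv.subRight i).tsum_eq]
    refine tsum_congr fun k => ?_
    simp only [Equiv.subRight_apply]
    rw [← mul_assoc]
    congr 2
    ring
  rw [e1, e2]
  refine Summable.tsum_comm (f := fun i k => x i * y (k - i) * z (n - k)) ?_
  apply Summable.of_norm
  have h := cx.shear hr cy
  -- multiply by bounded ‖z (n-k)‖ * r^(-k)
  have hb : ∃ C, ∀ k, ‖z k‖ * r ^ k ≤ C := by
    refine ⟨∑' k, ‖z k‖ * r ^ k, fun k => ?_⟩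
    exact Summable.le_tsum cz k (fun j _ => by positivity)
  obtain ⟨C, hC⟩ := hb
  refine Summable.of_nonneg_of_le (fun _ => norm_nonneg _) (fun p => ?_)
    (h.mul_right (C * (r ^ n)⁻¹))
  have h4 := hC (n - p.2)
  have hn : 0 < r ^ n := zpow_pos hr n
  have hk : 0 < r ^ p.2 := zpow_pos hr _
  have h5 : ‖z (n - p.2)‖ ≤ r ^ p.2 * (C * (r ^ n)⁻¹) := by
    rw [zpow_sub₀ hr.ne'] at h4
    field_simp at h4 ⊢
    exact h4
  simp only [Function.uncurry]
  rw [norm_mul, norm_mul, mul_assoc (‖x p.1‖ * ‖y (p.2 - p.1)‖)]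
  gcongr

theorem conv_add [CompleteSpace K] {x y z : ℤ → K} (hx : IsRob x) (hy : IsRob y)
    (hz : IsRob z) : conv x (y + z) = conv x y + conv x z := by
  ext n
  obtain ⟨r, hr, cx, cy, cz⟩ := hx.exists_conv3 hy hz
  unfold conv
  rw [Pi.add_apply, ← Summable.tsum_add (cx.summable hr cy n) (cx.summable hr cz n)]
  simp [mul_add]

theorem isRob_single (n : ℤ) (a : K) : IsRob (Pi.single n a) := by
  refine ⟨1/2, by norm_num, by norm_num, fun r _ _ => ?_⟩
  refine summable_of_ne_finset_zero (s := {n}) fun i hi => ?_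
  have : i ≠ n := by simpa using hi
  simp [this]

theorem single_conv (n : ℤ) (a : K) (x : ℤ → K) (m : ℤ) :
    conv (Pi.single n a) x m = a * x (m - n) := by
  unfold conv
  rw [tsum_eq_single n]
  · simp
  · intro i hi; simp [hi]

variable (K) in
def robAdd : AddSubgroup (ℤ → K) where
  carrier := {x | IsRob x}
  add_mem' := IsRob.add
  zero_mem' := by simpa using isRob_single (K := K) 0 0
  neg_mem' := by
    intro x hx
    simpa [IsRob, Conv] using hx

end basic

variable (K : Type*) [NormedField K] [CompleteSpace K]

def Robba : Type _ := robAdd K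

instance : AddCommGroup (Robba K) := inferInstanceAs (AddCommGroup (robAdd K))

variable {K}
def Robba.c (x : Robba K) : ℤ → K := x.1
theorem Robba.rob (x : Robba K) : IsRob x.c := x.2
theorem Robba.ext {x y : Robba K} (h : ∀ i, x.c i = y.c i) : x = y := Subtype.ext (funext h)
def mkR (x : ℤ → K) (h : IsRob x) : Robba K := ⟨x, h⟩

instance : CommRing (Robba K) where
  __ := (inferInstance : AddCommGroup (Robba K))
  mul x y := ⟨conv x.c y.c, x.rob.mul y.rob⟩
  one := ⟨Pi.single 0 1, isRob_single 0 1⟩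
  mul_assoc x y z := Subtype.ext (conv_assoc x.rob y.rob z.rob)
  mul_comm x y := Subtype.ext (conv_comm x.c y.c)
  one_mul x := Subtype.ext (by
    ext m
    exact (single_conv 0 1 x.c m).trans (by simp [Robba.c]))
  mul_one x := Subtype.ext (by
    ext m
    refine (congrFun (conv_comm x.c (Pi.single 0 1)) m).trans ?_
    exact (single_conv 0 1 x.c m).trans (by simp [Robba.c]))
  left_distrib x y z := Subtype.ext (conv_add x.rob y.rob z.rob)
  right_distrib x y z := Subtype.ext (by
    refine (conv_comm (x + y).c z.c).trans ((conv_add z.rob x.rob y.rob).trans ?_)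
    rw [conv_comm, conv_comm z.c]; rfl)
  zero_mul x := Subtype.ext (by
    ext m
    show ∑' i, (0 : K) * x.c (m - i) = 0
    simp)
  mul_zero x := Subtype.ext (by
    ext m
    show ∑' i, x.c i * 0 = 0
    simp)

@[simp] theorem c_mk (x : ℤ → K) (h : IsRob x) : (mkR x h).c = x := rfl
@[simp] theorem c_add (x y : Robba K) (i : ℤ) : (x + y).c i = x.c i + y.c i := rfl
@[simp] theorem c_neg (x : Robba K) (i : ℤ) : (-x).c i = - x.c i := rfl
@[simp] theorem c_sub (x y : Robba K) (i : ℤ) : (x - y).c i = x.c i - y.c i := rfl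
@[simp] theorem c_zero (i : ℤ) : (0 : Robba K).c i = 0 := rfl
theorem c_one (i : ℤ) : (1 : Robba K).c i = if i = 0 then 1 else 0 := by
  show (Pi.single 0 1 : ℤ → K) i = _
  simp [Pi.single_apply]
theorem c_mul (x y : Robba K) : (x * y).c = conv x.c y.c := rfl
@[simp] theorem c_sum {ι : Type*} (s : Finset ι) (f : ι → Robba K) (i : ℤ) :
    (∑ a ∈ s, f a).c i = ∑ a ∈ s, (f a).c i := by
  classical
  induction s using Finset.induction_on with
  | empty => simp
  | insert a s h ih => rw [Finset.sum_insert h, Finset.sum_insert h, c_add, ih]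

theorem summ (x y : Robba K) (n : ℤ) : Summable fun i => x.c i * y.c (n - i) := by
  obtain ⟨r, hr, h1, h2⟩ := x.rob.exists_conv y.rob
  exact h1.summable hr h2 n

/-- constants -/
def C : K →+* Robba K where
  toFun a := mkR (Pi.single 0 a) (isRob_single 0 a)
  map_one' := rfl
  map_zero' := Robba.ext fun i => by simp
  map_add' a b := Robba.ext fun i => by simp [Pi.single_add]
  map_mul' a b := Robba.ext fun i => by
    rw [c_mul, c_mk, c_mk, single_conv]
    simp [Pi.single_apply]

theorem c_C_mul (a : K) (x : Robba K) (i : ℤ) : (C a * x).c i = a * x.c i := by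
  rw [c_mul]; exact (single_conv 0 a x.c i).trans (by simp)

theorem c_C (a : K) (i : ℤ) : (C a).c i = if i = 0 then a else 0 := by
  show (Pi.single 0 a : ℤ → K) i = _
  simp [Pi.single_apply]

end Rob

namespace Rob

open Filter Topology

section gauss
variable {K : Type*} [NormedField K] [CompleteSpace K]

theorem exists_dom {r : ℝ} (hr : 0 < r) {x : ℤ → K} (hx : Conv r x) (h0 : x ≠ 0) :
    ∃ a, x a ≠ 0 ∧ (∀ i, ‖x i‖ * r ^ i ≤ ‖x a‖ * r ^ a) ∧
      ∀ i < a, ‖x i‖ * r ^ i < ‖x a‖ * r ^ a := by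
  set f : ℤ → ℝ := fun i => ‖x i‖ * r ^ i with hf
  obtain ⟨j, hj⟩ := Function.ne_iff.1 h0
  have hj' : x j ≠ 0 := hj
  have hfj : 0 < f j := mul_pos (norm_pos_iff.2 hj') (zpow_pos hr _)
  have ht : Tendsto f cofinite (𝓝 0) := Summable.tendsto_cofinite_zero hx
  have hfin : {i | f j ≤ f i}.Finite := by
    have h := ht.eventually (gt_mem_nhds hfj)
    rw [Filter.eventually_cofinite] at h
    simpa using h
  obtain ⟨b, hb, hbm⟩ := hfin.toFinset.exists_max_image f ⟨j, by simp⟩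
  have hb1 : f j ≤ f b := by simpa using hb
  have hmax : ∀ i, f i ≤ f b := by
    intro i
    by_cases h : f j ≤ f i
    · exact hbm i (by simpa using h)
    · exact (not_le.1 h).le.trans hb1
  have hfin2 : {i | f i = f b}.Finite := hfin.subset fun i hi => by
    simp only [Set.mem_ofPred_eq] at hi ⊢; rw [hi]; exact hb1
  obtain ⟨a, ha, hamin⟩ := hfin2.toFinset.exists_min_image id ⟨b, by simp⟩
  have ha1 : f a = f b := by simpa using ha
  refine ⟨a, ?_, fun i => (hmax i).trans ha1.ge, fun i hi => ?_⟩
  · intro h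
    have : f a = 0 := by simp [hf, h]
    linarith
  · refine lt_of_le_of_ne ((hmax i).trans ha1.ge) fun h => ?_
    have := hamin i (by simpa using h.trans ha1)
    simp at this; omega

theorem uniform_lt {g : ℤ → K} (hg : Tendsto g cofinite (𝓝 0)) {M : ℝ} (hM : 0 < M)
    (h : ∀ i, ‖g i‖ < M) : ∃ M' < M, ∀ i, ‖g i‖ ≤ M' := by
  have hfin : {i | M / 2 ≤ ‖g i‖}.Finite := by
    have h := (tendsto_norm_zero.comp hg).eventually (gt_mem_nhds (half_pos hM))
    rw [Filter.eventually_cofinite] at h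
    simpa using h
  by_cases hne : hfin.toFinset.Nonempty
  · obtain ⟨b, hb, hbm⟩ := hfin.toFinset.exists_max_image (fun i => ‖g i‖) hne
    refine ⟨max (M/2) ‖g b‖, max_lt (half_lt_self hM) (h b), fun i => ?_⟩
    by_cases hi : M / 2 ≤ ‖g i‖
    · exact (hbm i (by simpa using hi)).trans (le_max_right _ _)
    · exact (not_le.1 hi).le.trans (le_max_left _ _)
  · refine ⟨M / 2, half_lt_self hM, fun i => ?_⟩
    by_contra hi
    exact hne ⟨i, by simpa using (not_le.1 hi).le⟩

theorem gauss [IsUltrametricDist K] {r : ℝ} (hr : 0 < r) {x y : ℤ → K} (hx : Conv r x)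
    (hy : Conv r y) (hx0 : x ≠ 0) (hy0 : y ≠ 0) :
    ∃ n, conv x y n ≠ 0 ∧
      ∀ i j, (‖x i‖ * r ^ i) * (‖y j‖ * r ^ j) ≤ ‖conv x y n‖ * r ^ n := by
  obtain ⟨a, hxa, ha, ha'⟩ := exists_dom hr hx hx0
  obtain ⟨b, hyb, hb, hb'⟩ := exists_dom hr hy hy0
  have hs := hx.summable hr hy (a + b)
  have key : ‖conv x y (a + b)‖ = ‖x a‖ * ‖y b‖ := by
    classical
    have e : conv x y (a + b) = x a * y b +
        ∑' i, if i = a then 0 else x i * y (a + b - i) := by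
      unfold conv
      rw [hs.tsum_eq_add_tsum_ite a]
      simp
    set g : ℤ → K := fun i => if i = a then 0 else x i * y (a + b - i) with hg
    have hM : 0 < ‖x a‖ * ‖y b‖ := mul_pos (norm_pos_iff.2 hxa) (norm_pos_iff.2 hyb)
    have hgt : Tendsto g cofinite (𝓝 0) := by
      refine squeeze_zero_norm (fun i => ?_) (tendsto_norm_zero.comp hs.tendsto_cofinite_zero)
      simp only [hg, Function.comp]
      split_ifs
      · rw [norm_zero]; positivity
      · exact le_rfl
    have hlt : ∀ i, ‖g i‖ < ‖x a‖ * ‖y b‖ := by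
      intro i
      simp only [hg]
      split_ifs with hi
      · simpa using hM
      · rw [norm_mul]
        have hz : 0 < r ^ (a + b) := zpow_pos hr _
        refine lt_of_mul_lt_mul_right (a := r ^ (a + b)) ?_ hz.le
        have e1 : r ^ (a + b) = r ^ i * r ^ (a + b - i) := by
          rw [← zpow_add₀ hr.ne']; congr 1; ring
        have e2 : r ^ (a + b) = r ^ a * r ^ b := zpow_add₀ hr.ne' _ _
        have l1 : ‖x i‖ * ‖y (a + b - i)‖ * r ^ (a + b) =
            (‖x i‖ * r ^ i) * (‖y (a + b - i)‖ * r ^ (a + b - i)) := by rw [e1]; ring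
        have l2 : ‖x a‖ * ‖y b‖ * r ^ (a + b) =
            (‖x a‖ * r ^ a) * (‖y b‖ * r ^ b) := by rw [e2]; ring
        rw [l1, l2]
        have pa : 0 < ‖x a‖ * r ^ a := mul_pos (norm_pos_iff.2 hxa) (zpow_pos hr _)
        have pb : 0 < ‖y b‖ * r ^ b := mul_pos (norm_pos_iff.2 hyb) (zpow_pos hr _)
        rcases lt_or_gt_of_ne hi with h | h
        · exact lt_of_le_of_lt (mul_le_mul_of_nonneg_left (hb _) (by positivity))
              (mul_lt_mul_of_pos_right (ha' i h) pb)
        · exact lt_of_le_of_lt (mul_le_mul_of_nonneg_right (ha i) (by positivity))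
              (mul_lt_mul_of_pos_left (hb' _ (by omega)) pa)
    obtain ⟨M', hM', hle⟩ := uniform_lt hgt hM hlt
    have hts : ‖∑' i, g i‖ < ‖x a * y b‖ := by
      rw [norm_mul]
      exact (IsUltrametricDist.norm_tsum_le_of_forall_le hle).trans_lt hM'
    rw [e, IsUltrametricDist.norm_add_eq_max_of_norm_ne_norm hts.ne', max_eq_left hts.le, norm_mul]
  refine ⟨a + b, ?_, fun i j => ?_⟩
  · rw [← norm_ne_zero_iff, key]
    exact mul_ne_zero (norm_ne_zero_iff.2 hxa) (norm_ne_zero_iff.2 hyb)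
  · rw [key, zpow_add₀ hr.ne']
    calc _ ≤ (‖x a‖ * r ^ a) * (‖y b‖ * r ^ b) :=
          mul_le_mul (ha i) (hb j) (by positivity) (by positivity)
      _ = _ := by ring

theorem c_ne_zero {x : Robba K} (h : x ≠ 0) : x.c ≠ 0 := fun h' =>
  h (Robba.ext fun i => congrFun h' i)

instance [IsUltrametricDist K] : IsDomain (Robba K) := by
  haveI : Nontrivial (Robba K) := ⟨0, 1, fun h => by
    have := congrArg (fun x : Robba K => x.c 0) h
    simp [c_one] at this⟩
  haveI : NoZeroDivisors (Robba K) := ⟨by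
    intro x y h
    by_contra hh
    push Not at hh
    obtain ⟨r, hr, h1, h2⟩ := x.rob.exists_conv y.rob
    obtain ⟨n, hn, -⟩ := gauss hr h1 h2 (c_ne_zero hh.1) (c_ne_zero hh.2)
    apply hn
    rw [← c_mul, h]; rfl⟩
  exact NoZeroDivisors.to_isDomain _

def Bdd (x : Robba K) : Prop := ∃ C, ∀ i, ‖x.c i‖ ≤ C

variable (K) in
def bddSub [IsUltrametricDist K] : Subring (Robba K) where
  carrier := {x | Bdd x}
  mul_mem' := by
    rintro x y ⟨a, ha⟩ ⟨b, hb⟩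
    have ha0 : 0 ≤ a := (norm_nonneg _).trans (ha 0)
    refine ⟨a * b, fun n => ?_⟩
    rw [c_mul]
    refine IsUltrametricDist.norm_tsum_le_of_forall_le fun i => ?_
    rw [norm_mul]
    exact mul_le_mul (ha _) (hb _) (norm_nonneg _) ha0
  add_mem' := by
    rintro x y ⟨a, ha⟩ ⟨b, hb⟩
    exact ⟨a + b, fun n => (norm_add_le _ _).trans (add_le_add (ha n) (hb n))⟩
  one_mem' := ⟨1, fun i => by rw [c_one]; split_ifs <;> simp⟩
  zero_mem' := ⟨0, fun i => by simp⟩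
  neg_mem' := by
    rintro x ⟨a, ha⟩
    exact ⟨a, fun i => by simpa using ha i⟩

def Supp (N : ℤ) (x : Robba K) : Prop := ∀ i < N, x.c i = 0

theorem Supp.mul {a b : ℤ} {x y : Robba K} (hx : Supp a x) (hy : Supp b y) :
    Supp (a + b) (x * y) := by
  intro n hn
  rw [c_mul]
  unfold conv
  convert tsum_zero with i
  by_cases h : i < a
  · rw [hx i h, zero_mul]
  · rw [hy _ (by omega), mul_zero]

theorem Supp.add {a : ℤ} {x y : Robba K} (hx : Supp a x) (hy : Supp a y) : Supp a (x + y) :=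
  fun n hn => by simp [hx n hn, hy n hn]

variable (K) in
def suppSub : Subring (Robba K) where
  carrier := {x | Supp 0 x}
  mul_mem' := fun {x y} hx hy => by simpa using Supp.mul hx hy
  add_mem' := Supp.add
  one_mem' := fun i hi => by rw [c_one, if_neg hi.ne]
  zero_mem' := fun i _ => rfl
  neg_mem' := fun {x} hx i hi => by simp [hx i hi]

theorem C_mem_supp (a : K) : C a ∈ suppSub K := fun i hi => by rw [c_C, if_neg hi.ne]

/-- key bound -/
theorem bdd_of_mul [IsUltrametricDist K] {f b e : Robba K} (hf : Supp 0 f) (hb : b ≠ 0)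
    (he : Bdd e) (h : f * b = e) : Bdd f := by
  by_cases hf0 : f = 0
  · rw [hf0]; exact (bddSub K).zero_mem
  obtain ⟨ρ, hρ, hρ1, hc⟩ := f.rob.two b.rob
  obtain ⟨ρ', hρ', hρ'1, hc'⟩ := e.rob
  obtain ⟨r0, hr0, hr01⟩ := exists_between (max_lt hρ1 hρ'1)
  have hr0p : 0 < r0 := hρ.trans ((le_max_left _ _).trans_lt hr0)
  obtain ⟨C, hC⟩ := he
  have hce := hc' r0 ((le_max_right _ _).trans_lt hr0) hr01
  obtain ⟨j, hj⟩ := Function.ne_iff.1 (c_ne_zero hb)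
  have hj' : 0 < ‖b.c j‖ := norm_pos_iff.2 hj
  set C0 := ∑' i, ‖e.c i‖ * r0 ^ i
  have hC0 : ∀ i, ‖e.c i‖ * r0 ^ i ≤ C0 := fun i =>
    Summable.le_tsum hce i (fun j _ => by positivity)
  set C2 := max C C0
  have hE : ∀ r, r0 < r → r < 1 → ∀ n, ‖e.c n‖ * r ^ n ≤ C2 := by
    intro r hr hr1 n
    have hrp := hr0p.trans hr
    rcases le_or_gt 0 n with hn | hn
    · refine le_trans ?_ (le_max_left _ _)
      have : r ^ n ≤ 1 := by
        lift n to ℕ using hn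
        rw [zpow_natCast]
        exact pow_le_one₀ hrp.le hr1.le
      calc _ ≤ ‖e.c n‖ * 1 := by gcongr
        _ ≤ C := by simpa using hC n
    · refine le_trans ?_ ((hC0 n).trans (le_max_right _ _))
      gcongr ‖e.c n‖ * ?_
      obtain ⟨m, rfl⟩ : ∃ m : ℕ, n = -(m : ℤ) := ⟨n.natAbs, by omega⟩
      rw [zpow_neg, zpow_neg, zpow_natCast, zpow_natCast]
      gcongr
  refine ⟨C2 / ‖b.c j‖, fun i => ?_⟩
  rw [le_div_iff₀ hj']
  -- limit r → 1
  have hlim : Tendsto (fun r : ℝ => (‖f.c i‖ * r ^ i) * (‖b.c j‖ * r ^ j)) (𝓝[<] 1)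
      (𝓝 ((‖f.c i‖ * 1 ^ i) * (‖b.c j‖ * 1 ^ j))) := by
    have hz : ∀ m : ℤ, Tendsto (fun r : ℝ => r ^ m) (𝓝[<] 1) (𝓝 (1 ^ m)) := fun m =>
      (continuousAt_zpow₀ (1 : ℝ) m (Or.inl one_ne_zero)).tendsto.mono_left nhdsWithin_le_nhds
    exact ((hz i).const_mul _).mul ((hz j).const_mul _)
  simp only [one_zpow, mul_one] at hlim
  refine le_of_tendsto hlim ?_
  filter_upwards [Ioo_mem_nhdsLT hr01] with r hr
  have hrp := hr0p.trans hr.1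
  have hc1 := hc r (((le_max_left _ _).trans_lt hr0).trans hr.1) hr.2
  obtain ⟨n, -, hn⟩ := gauss hrp hc1.1 hc1.2 (c_ne_zero hf0) (c_ne_zero hb)
  refine (hn i j).trans ?_
  rw [← c_mul, h]
  exact hE r hr.1 hr.2 n

end gauss

section frob
variable {K : Type*} [NormedField K] [CompleteSpace K]
variable (τ : K →+* K) (q : ℕ)

def sigc (x : ℤ → K) (i : ℤ) : K := if (q : ℤ) ∣ i then τ (x (i / q)) else 0

theorem sigc_mul (hq : 2 ≤ q) (x : ℤ → K) (j : ℤ) : sigc τ q x (q * j) = τ (x j) := by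
  have : (q : ℤ) ≠ 0 := by omega
  rw [sigc, if_pos (dvd_mul_right _ _), Int.mul_ediv_cancel_left _ this]

theorem q_inj (hq : 2 ≤ q) : Function.Injective fun j : ℤ => (q : ℤ) * j := by
  intro a b h
  have : (q : ℤ) ≠ 0 := by omega
  exact mul_left_cancel₀ this h

theorem isRob_sigc (hτ : ∀ a, ‖τ a‖ = ‖a‖) (hq : 2 ≤ q) {x : ℤ → K} (hx : IsRob x) : IsRob (sigc τ q x) := by
  obtain ⟨ρ, h0, h1, h⟩ := hx
  have hq0 : (0 : ℝ) < q := by positivity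
  have hq2 : (2 : ℝ) ≤ q := by exact_mod_cast hq
  have hlt : (1 - ρ) / q < 1 := by rw [div_lt_one hq0]; linarith
  refine ⟨1 - (1 - ρ) / q, by linarith, by have : 0 < (1 - ρ) / q := div_pos (by linarith) hq0
                                           linarith, fun r hr hr1 => ?_⟩
  have hb := one_add_mul_le_pow (a := -((1 - ρ) / q)) (by linarith) q
  have e : 1 + (q : ℝ) * -((1 - ρ) / q) = ρ := by field_simp; ring
  rw [e] at hb
  have hrp : 0 < r := by linarith
  have hrq : ρ < r ^ q := by
    refine hb.trans_lt (pow_lt_pow_left₀ (by linarith) (by linarith) (by omega))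
  have hrq1 : r ^ q < 1 := pow_lt_one₀ hrp.le hr1 (by omega)
  have hc := h _ hrq hrq1
  unfold Conv
  rw [← (q_inj q hq).summable_iff]
  · refine hc.congr fun j => ?_
    simp only [Function.comp]
    rw [sigc_mul τ q hq, hτ, zpow_mul, zpow_natCast]
  · intro i hi
    have : ¬ (q : ℤ) ∣ i := fun ⟨j, hj⟩ => hi ⟨j, hj.symm⟩
    simp [sigc, this]

variable (hτ : ∀ a, ‖τ a‖ = ‖a‖) (hq : 2 ≤ q)

def sig : Robba K →+* Robba K where
  toFun x := mkR (sigc τ q x.c) (isRob_sigc τ q hτ hq x.rob)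
  map_one' := Robba.ext fun i => by
    simp only [c_mk, sigc, c_one]
    by_cases hi : (q : ℤ) ∣ i
    · obtain ⟨j, rfl⟩ := hi
      have : (q : ℤ) ≠ 0 := by omega
      have h' : q ≠ 0 := by omega
      rw [if_pos (dvd_mul_right _ _), Int.mul_ediv_cancel_left _ this]
      simp [h', apply_ite τ]
    · have : i ≠ 0 := by rintro rfl; simp at hi
      simp [hi, this]
  map_zero' := Robba.ext fun i => by simp [sigc]
  map_add' x y := Robba.ext fun i => by
    simp only [c_mk, sigc, c_add]
    split_ifs <;> simp
  map_mul' x y := Robba.ext fun n => by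
    have hcont : Continuous τ := by
      have : Isometry τ := AddMonoidHomClass.isometry_of_norm τ hτ
      exact this.continuous
    have e1 : conv (sigc τ q x.c) (sigc τ q y.c) n =
        ∑' j, τ (x.c j) * sigc τ q y.c (n - q * j) := by
      unfold conv
      rw [← (q_inj q hq).tsum_eq]
      · refine tsum_congr fun j => ?_
        rw [sigc_mul τ q hq]
      · intro i hi
        by_contra hr
        have : ¬ (q : ℤ) ∣ i := fun ⟨j, hj⟩ => hr ⟨j, hj.symm⟩
        apply hi
        simp [sigc, this]
    show sigc τ q (conv x.c y.c) n = conv (sigc τ q x.c) (sigc τ q y.c) n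
    rw [e1]
    by_cases hn : (q : ℤ) ∣ n
    · obtain ⟨m, rfl⟩ := hn
      rw [sigc_mul τ q hq]
      unfold conv
      rw [(summ x y m).map_tsum τ hcont]
      refine tsum_congr fun j => ?_
      rw [← mul_sub, sigc_mul τ q hq, map_mul]
    · rw [sigc, if_neg hn]
      symm
      convert tsum_zero with j
      have : ¬ (q : ℤ) ∣ n - q * j := fun h => hn ((dvd_sub_left (dvd_mul_right _ _)).1 h)
      simp [sigc, this]

theorem sig_c (x : Robba K) : (sig τ q hτ hq x).c = sigc τ q x.c := rfl

theorem sig_C (a : K) : sig τ q hτ hq (C a) = C (τ a) := Robba.ext fun i => by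
  rw [sig_c, sigc, c_C, c_C]
  have : (q : ℤ) ≠ 0 := by omega
  by_cases hi : (q : ℤ) ∣ i
  · obtain ⟨j, rfl⟩ := hi
    have h' : q ≠ 0 := by omega
    rw [if_pos (dvd_mul_right _ _), Int.mul_ediv_cancel_left _ this]
    simp [h', apply_ite τ]
  · have : i ≠ 0 := by rintro rfl; simp at hi
    simp [hi, this]

theorem Supp.sig {N : ℤ} {x : Robba K} (hx : Supp N x) : Supp (q * N) (sig τ q hτ hq x) := by
  intro i hi
  rw [sig_c, sigc]
  split_ifs with h
  · obtain ⟨j, rfl⟩ := h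
    have h2 : (q : ℤ) ≠ 0 := by omega
    rw [Int.mul_ediv_cancel_left _ h2, hx j (lt_of_mul_lt_mul_left hi (by omega)), map_zero]
  · rfl

end frob
end Rob

namespace Rob
open Filter Topology

section gen
theorem rank_lemma {R : Type*} [CommRing R] [Nontrivial R] {n l : ℕ}
    (L : Matrix (Fin l) (Fin n) R) (V : Matrix (Fin n) (Fin l) R) (h : L * V = 1) :
    ∃ I : Fin l → Fin n, (V.submatrix I id).det ≠ 0 := by
  by_contra hh
  push Not at hh
  have h1 : (L * V).det = 1 := by rw [h, Matrix.det_one]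
  have h2 : L * V = Matrix.of (fun i => ∑ k, L i k • V k) := by
    ext i j
    simp [Matrix.mul_apply]
  have h3 : (L * V).det = 0 := by
    rw [h2]
    show Matrix.detRowAlternating.toMultilinearMap (fun i => ∑ k, L i k • V k) = 0
    rw [MultilinearMap.map_sum]
    refine Finset.sum_eq_zero fun I _ => ?_
    rw [MultilinearMap.map_smul_univ]
    have : Matrix.detRowAlternating.toMultilinearMap (fun i => V (I i)) = 0 := hh I
    rw [this, smul_zero]
  exact one_ne_zero (h1.symm.trans h3)

variable {R : Type*} [CommRing R] (S : Subring R)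

theorem mul_memM {n m l : Type*} [Fintype m] {X : Matrix n m R} {Y : Matrix m l R}
    (hX : ∀ i j, X i j ∈ S) (hY : ∀ i j, Y i j ∈ S) (i j) : (X * Y) i j ∈ S := by
  rw [Matrix.mul_apply]
  exact S.sum_mem fun k _ => S.mul_mem (hX _ _) (hY _ _)

theorem one_memM {n : Type*} [DecidableEq n] (i j : n) :
    (1 : Matrix n n R) i j ∈ S := by
  rw [Matrix.one_apply]
  split_ifs
  exacts [S.one_mem, S.zero_mem]

theorem det_memM {n : Type*} [Fintype n] [DecidableEq n] {X : Matrix n n R}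
    (hX : ∀ i j, X i j ∈ S) : X.det ∈ S := by
  have : X = (Matrix.of fun i j => (⟨X i j, hX i j⟩ : S)).map S.subtype := by ext; rfl
  rw [this]
  rw [← RingHom.mapMatrix_apply, ← RingHom.map_det]
  exact Subtype.property _

theorem adj_memM {n : Type*} [Fintype n] [DecidableEq n] {X : Matrix n n R}
    (hX : ∀ i j, X i j ∈ S) (i j) : X.adjugate i j ∈ S := by
  have : X = (Matrix.of fun i j => (⟨X i j, hX i j⟩ : S)).map S.subtype := by ext; rfl
  rw [this]
  rw [← RingHom.mapMatrix_apply, ← RingHom.map_adjugate]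
  exact Subtype.property _
end gen

variable {K : Type*} [NormedField K] [CompleteSpace K] [IsUltrametricDist K]
variable (τ : K →+* K) (q : ℕ) (hτ : ∀ a, ‖τ a‖ = ‖a‖) (hq : 2 ≤ q)

section T
variable {n : ℕ}

/-- recursion -/
def tt (A : ℤ → Matrix (Fin n) (Fin n) K) (D : Matrix (Fin n) (Fin n) K) (N : ℕ) :
    Matrix (Fin n) (Fin n) K :=
  if N = 0 then 1 else
    (∑ j : Fin N, A (N - q * (j : ℕ)) * (tt A D j).map τ) * D
termination_by N
decreasing_by exact j.2

theorem tt_zero (A : ℤ → Matrix (Fin n) (Fin n) K) (D) : tt τ q A D 0 = 1 := by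
  rw [tt, if_pos rfl]

theorem tt_pos (A : ℤ → Matrix (Fin n) (Fin n) K) (D) {N : ℕ} (h : N ≠ 0) :
    tt τ q A D N = (∑ j ∈ Finset.range N, A (N - q * (j : ℕ)) * (tt τ q A D j).map τ) * D := by
  rw [tt, if_neg h, Finset.sum_range]

theorem tt_bound (hτ : ∀ a, ‖τ a‖ = ‖a‖) (hq : 2 ≤ q) (A : ℤ → Matrix (Fin n) (Fin n) K)
    (D : Matrix (Fin n) (Fin n) K)
    (hA0 : ∀ i < 0, A i = 0) (c : ℝ) (hc : 1 ≤ c) (hA : ∀ i a b, ‖A i a b‖ ≤ c)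
    (hD : ∀ a b, ‖D a b‖ ≤ c) :
    ∃ s : ℕ, ∀ N a b, ‖tt τ q A D N a b‖ ≤ ((N : ℝ) + 1) ^ s := by
  obtain ⟨s, hs⟩ := exists_pow_lt_of_lt_one (show (0:ℝ) < (c ^ 2)⁻¹ by positivity)
    (show (3/4 : ℝ) < 1 by norm_num)
  have hs' : c ^ 2 * (3/4 : ℝ) ^ s ≤ 1 := by
    rw [lt_inv_comm₀ (by positivity) (by positivity)] at hs
    have h1 : 0 < (3/4 : ℝ) ^ s := by positivity
    calc _ ≤ ((3/4 : ℝ) ^ s)⁻¹ * (3/4 : ℝ) ^ s := by gcongr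
      _ = 1 := inv_mul_cancel₀ h1.ne'
  refine ⟨s, fun N => ?_⟩
  induction N using Nat.strong_induction_on with
  | _ N ih =>
  intro a b
  by_cases h0 : N = 0
  · subst h0
    rw [tt_zero, Matrix.one_apply]
    split_ifs <;> simp
  rw [tt_pos _ _ _ _ h0, Matrix.mul_apply]
  have hN1 : (1 : ℝ) ≤ N := by exact_mod_cast Nat.one_le_iff_ne_zero.2 h0
  have key : c * ((N : ℝ) / 2 + 1) ^ s * c ≤ ((N : ℝ) + 1) ^ s := by
    calc c * ((N : ℝ) / 2 + 1) ^ s * c ≤ c * ((3/4) * ((N : ℝ) + 1)) ^ s * c := by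
          gcongr; linarith
      _ = (c ^ 2 * (3/4 : ℝ) ^ s) * ((N : ℝ) + 1) ^ s := by rw [mul_pow]; ring
      _ ≤ 1 * ((N : ℝ) + 1) ^ s := by gcongr
      _ = _ := one_mul _
  refine le_trans ?_ key
  refine IsUltrametricDist.norm_sum_le_of_forall_le_of_nonneg (by positivity) fun m _ => ?_
  rw [norm_mul]
  refine mul_le_mul ?_ (hD _ _) (norm_nonneg _) (by positivity)
  rw [Matrix.sum_apply]
  refine IsUltrametricDist.norm_sum_le_of_forall_le_of_nonneg (by positivity) fun j hj => ?_
  by_cases hneg : (N : ℤ) - q * (j : ℕ) < 0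
  · rw [hA0 _ hneg]; simp; positivity
  rw [Matrix.mul_apply]
  refine IsUltrametricDist.norm_sum_le_of_forall_le_of_nonneg (by positivity) fun m' _ => ?_
  rw [norm_mul, Matrix.map_apply, hτ]
  refine mul_le_mul (hA _ _ _) ((ih j (Finset.mem_range.1 hj) _ _).trans ?_) (norm_nonneg _)
    (by positivity)
  gcongr
  have h1 : q * j ≤ N := by zify; omega
  have h2 : 2 * j ≤ N := (Nat.mul_le_mul_right j hq).trans h1
  have h3 : (2 : ℝ) * j ≤ N := by exact_mod_cast h2
  linarith

theorem natCast_injZ : Function.Injective (fun j : ℕ => (j : ℤ)) := Nat.cast_injective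

theorem isRob_of_poly (t : ℕ → K) (s : ℕ) (ht : ∀ N, ‖t N‖ ≤ ((N : ℝ) + 1) ^ s) :
    IsRob fun i : ℤ => if i < 0 then 0 else t i.toNat := by
  refine ⟨1/2, by norm_num, by norm_num, fun r hr hr1 => ?_⟩
  have hrp : 0 < r := by linarith
  unfold Conv
  rw [← natCast_injZ.summable_iff]
  · have h1 : Summable fun N : ℕ => ((N : ℝ)) ^ s * r ^ N :=
      summable_pow_mul_geometric_of_norm_lt_one s (by rw [Real.norm_of_nonneg hrp.le]; exact hr1)
    have h2 := (summable_nat_add_iff 1).2 h1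
    have h3 := h2.mul_right (r⁻¹)
    refine Summable.of_nonneg_of_le (fun N => by simp only [Function.comp]; positivity)
      (fun N => ?_) h3
    simp only [Function.comp]
    rw [if_neg (by omega), Int.toNat_natCast, zpow_natCast]
    push_cast
    rw [pow_succ, mul_assoc, mul_assoc, mul_inv_cancel₀ hrp.ne', mul_one]
    gcongr
    exact ht N
  · intro i hi
    have : i < 0 := by
      by_contra h
      exact hi ⟨i.toNat, by simp; omega⟩
    simp [this]

theorem mul_sig_c (x y : Robba K) (N : ℤ) :
    (x * sig τ q hτ hq y).c N = ∑' j, x.c (N - q * j) * τ (y.c j) := by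
  rw [mul_comm, c_mul]
  unfold conv
  rw [← (q_inj q hq).tsum_eq]
  · refine tsum_congr fun j => ?_
    rw [sig_c, sigc_mul τ q hq, mul_comm]
  · intro i hi
    by_contra hr
    have : ¬ (q : ℤ) ∣ i := fun ⟨j, hj⟩ => hr ⟨j, hj.symm⟩
    apply hi
    simp [sig_c, sigc, this]

theorem mul_sig_c_nat {x y : Robba K} (hx : Supp 0 x) (hy : Supp 0 y) (N : ℕ) :
    (x * sig τ q hτ hq y).c N =
      ∑ j ∈ Finset.range (N + 1), x.c (N - q * (j : ℕ)) * τ (y.c (j : ℕ)) := by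
  rw [mul_sig_c, ← natCast_injZ.tsum_eq]
  · refine tsum_eq_sum fun j hj => ?_
    have : N < j := by simpa using hj
    have h2 : j ≤ q * j := Nat.le_mul_of_pos_left _ (by omega)
    rw [hx _ (by zify at h2 this; omega), zero_mul]
  · intro i hi
    by_contra h
    have : i < 0 := by
      by_contra h'
      exact h ⟨i.toNat, by simp; omega⟩
    apply hi
    simp [hy _ this]

theorem C_map_mul_c {n m : ℕ} (X : Matrix (Fin n) (Fin n) (Robba K)) (Y : Matrix (Fin n) (Fin m) K)
    (a b) (N : ℤ) : (X * Y.map C) a b = ∑ k, C (Y k b) * X a k := by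
  rw [Matrix.mul_apply]
  exact Finset.sum_congr rfl fun k _ => mul_comm _ _

theorem exists_T (A : Matrix (Fin n) (Fin n) (Robba K)) (hA : ∀ a b, Supp 0 (A a b))
    (hAb : ∀ a b, Bdd (A a b)) (D : Matrix (Fin n) (Fin n) K)
    (hD : D * A.map (fun x => x.c 0) = 1) :
    ∃ T : Matrix (Fin n) (Fin n) (Robba K), (∀ a b, Supp 0 (T a b)) ∧
      T.map (fun x => x.c 0) = 1 ∧
      A * T.map (sig τ q hτ hq) = T * (A.map (fun x => x.c 0)).map C := by
  choose cA hcA using hAb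
  set c : ℝ := 1 + ∑ a, ∑ b, |cA a b| + ∑ a, ∑ b, ‖D a b‖ with hc
  have p1 : 0 ≤ ∑ a, ∑ b, |cA a b| := by positivity
  have p2 : 0 ≤ ∑ a, ∑ b, ‖D a b‖ := by positivity
  have hc1 : 1 ≤ c := by linarith
  have hb1 : ∀ a b, |cA a b| ≤ c := fun a b => by
    have h1 : |cA a b| ≤ ∑ b, |cA a b| :=
      Finset.single_le_sum (f := fun b => |cA a b|) (fun _ _ => abs_nonneg _) (Finset.mem_univ b)
    have h2 : ∑ b, |cA a b| ≤ ∑ a, ∑ b, |cA a b| :=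
      Finset.single_le_sum (f := fun a => ∑ b, |cA a b|) (fun _ _ => by positivity)
        (Finset.mem_univ a)
    linarith
  have hb2 : ∀ a b, ‖D a b‖ ≤ c := fun a b => by
    have h1 : ‖D a b‖ ≤ ∑ b, ‖D a b‖ :=
      Finset.single_le_sum (f := fun b => ‖D a b‖) (fun _ _ => norm_nonneg _) (Finset.mem_univ b)
    have h2 : ∑ b, ‖D a b‖ ≤ ∑ a, ∑ b, ‖D a b‖ :=
      Finset.single_le_sum (f := fun a => ∑ b, ‖D a b‖) (fun _ _ => by positivity)
        (Finset.mem_univ a)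
    linarith
  set Ac : ℤ → Matrix (Fin n) (Fin n) K := fun i => A.map (fun x => x.c i) with hAc
  obtain ⟨s, hs⟩ := tt_bound τ q hτ hq Ac D (fun i hi => by ext a b; exact hA a b i hi) c hc1
    (fun i a b => (hcA a b i).trans ((le_abs_self _).trans (hb1 a b))) hb2
  set t := tt τ q Ac D with ht
  set T : Matrix (Fin n) (Fin n) (Robba K) := Matrix.of fun a b =>
    mkR (fun i : ℤ => if i < 0 then 0 else t i.toNat a b)
      (isRob_of_poly (fun N => t N a b) s fun N => hs N a b) with hT
  have hTs : ∀ a b, Supp 0 (T a b) := fun a b i hi => if_pos hi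
  have hTc : ∀ a b (N : ℕ), (T a b).c N = t N a b := fun a b N => by
    show (if (N : ℤ) < 0 then (0 : K) else t (N : ℤ).toNat a b) = _
    rw [if_neg (by omega), Int.toNat_natCast]
  refine ⟨T, hTs, ?_, ?_⟩
  · ext a b
    have := hTc a b 0
    rw [ht, tt_zero] at this
    exact this
  · have hsT : ∀ a b, Supp 0 ((T.map (sig τ q hτ hq)) a b) := fun a b => by
      simpa using (hTs a b).sig τ q hτ hq
    have hCs : ∀ a b, Supp 0 (((A.map (fun x => x.c 0)).map C) a b) := fun a b =>
      C_mem_supp _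
    ext a b
    refine Robba.ext fun N => ?_
    rcases lt_or_ge N 0 with hN | hN
    · rw [mul_memM (suppSub K) hA hsT a b N hN, mul_memM (suppSub K) hTs hCs a b N hN]
    lift N to ℕ using hN
    rw [C_map_mul_c _ _ _ _ N, Matrix.mul_apply, c_sum, c_sum]
    have e1 : ∀ m, (A a m * (T.map (sig τ q hτ hq)) m b).c N =
        ∑ j ∈ Finset.range (N + 1), Ac (N - q * (j : ℕ)) a m * τ (t j m b) := fun m => by
      rw [Matrix.map_apply, mul_sig_c_nat τ q hτ hq (hA a m) (hTs m b)]
      refine Finset.sum_congr rfl fun j _ => ?_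
      rw [hTc]; rfl
    have e2 : ∀ m, (C (A.map (fun x => x.c 0) m b) * T a m).c N = t N a m * Ac 0 m b := fun m => by
      rw [c_C_mul, hTc, mul_comm]
    rw [Finset.sum_congr rfl fun m _ => e1 m, Finset.sum_congr rfl fun m _ => e2 m,
      Finset.sum_comm]
    have e3 : (∑ j ∈ Finset.range (N + 1), Ac (N - q * (j : ℕ)) * (t j).map τ) = t N * Ac 0 := by
      by_cases h0 : N = 0
      · subst h0
        rw [ht, Finset.sum_range_one, tt_zero]
        simp
      · rw [Finset.sum_range_succ]
        have hneg : (N : ℤ) - q * (N : ℕ) < 0 := by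
          have : 2 * N ≤ q * N := Nat.mul_le_mul_right _ hq
          zify at this; omega
        have : Ac (N - q * (N : ℕ)) = 0 := by ext a b; exact hA a b _ hneg
        rw [this, zero_mul, add_zero, ht, tt_pos τ q _ _ h0, mul_assoc, hD, mul_one]
    have e4 := congrFun (congrFun e3 a) b
    rw [Matrix.sum_apply] at e4
    simpa only [Matrix.mul_apply, Matrix.map_apply] using e4

end T
end Rob

namespace Rob
open Filter Topology

variable {K : Type*} [NormedField K] [CompleteSpace K] [IsUltrametricDist K]
variable (τ : K →+* K) (q : ℕ) (hτ : ∀ a, ‖τ a‖ = ‖a‖) (hq : 2 ≤ q)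

theorem c0_mul {x y : Robba K} (hx : Supp 0 x) (hy : Supp 0 y) :
    (x * y).c 0 = x.c 0 * y.c 0 := by
  rw [c_mul]
  unfold conv
  rw [tsum_eq_single 0]
  · simp
  · intro i hi
    rcases lt_or_gt_of_ne hi with h | h
    · rw [hx i h, zero_mul]
    · rw [hy _ (by omega), mul_zero]

theorem c0_matmul {n m l : ℕ} {X : Matrix (Fin n) (Fin m) (Robba K)}
    {Y : Matrix (Fin m) (Fin l) (Robba K)}
    (hX : ∀ a b, Supp 0 (X a b)) (hY : ∀ a b, Supp 0 (Y a b)) :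
    (X * Y).map (fun x => x.c 0) = X.map (fun x => x.c 0) * Y.map (fun x => x.c 0) := by
  ext a b
  simp only [Matrix.map_apply, Matrix.mul_apply, c_sum]
  exact Finset.sum_congr rfl fun m _ => c0_mul (hX _ _) (hY _ _)

theorem c0_one {n : ℕ} : (1 : Matrix (Fin n) (Fin n) (Robba K)).map (fun x => x.c 0) = 1 := by
  ext a b
  rw [Matrix.map_apply, Matrix.one_apply, Matrix.one_apply]
  split_ifs
  · rw [c_one, if_pos rfl]
  · rfl

theorem Supp.matmul {n m l : ℕ} {a b : ℤ} {X : Matrix (Fin n) (Fin m) (Robba K)}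
    {Y : Matrix (Fin m) (Fin l) (Robba K)}
    (hX : ∀ i j, Supp a (X i j)) (hY : ∀ i j, Supp b (Y i j)) (i j) :
    Supp (a + b) ((X * Y) i j) := by
  intro N hN
  rw [Matrix.mul_apply, c_sum]
  exact Finset.sum_eq_zero fun m _ => (hX i m).mul (hY m j) N hN

theorem eq_zero_of_frob {n : ℕ} {Φ Ψ D : Matrix (Fin n) (Fin n) (Robba K)}
    (hΦ : ∀ a b, Supp 0 (Φ a b)) (hΨ : ∀ a b, Supp 0 (Ψ a b)) (hD : ∀ a b, Supp 1 (D a b))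
    (h : D = Φ * D.map (sig τ q hτ hq) * Ψ) : D = 0 := by
  have key : ∀ N : ℕ, ∀ a b, Supp (N + 1) (D a b) := by
    intro N
    induction N with
    | zero => simpa using hD
    | succ N ih =>
      intro a b
      rw [h]
      have h1 : ∀ i j, Supp (q * (N + 1)) ((D.map (sig τ q hτ hq)) i j) := fun i j =>
        (ih i j).sig τ q hτ hq
      have h2 := Supp.matmul (Supp.matmul hΦ h1) hΨ a b
      intro i hi
      refine h2 i (hi.trans_le ?_)
      have : 2 * ((N : ℤ) + 1) ≤ q * (N + 1) :=
        mul_le_mul_of_nonneg_right (by exact_mod_cast hq) (by omega)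
      push_cast
      omega
  ext a b
  exact Robba.ext fun i => key i.toNat a b i (by omega)

theorem exists_U {n : ℕ} (Φ Ψ : Matrix (Fin n) (Fin n) (Robba K))
    (hΦ : ∀ a b, Supp 0 (Φ a b)) (hΨ : ∀ a b, Supp 0 (Ψ a b))
    (hΦb : ∀ a b, Bdd (Φ a b)) (hΨb : ∀ a b, Bdd (Ψ a b))
    (h1 : Φ * Ψ = 1) (h2 : Ψ * Φ = 1) :
    ∃ (U U' : Matrix (Fin n) (Fin n) (Robba K)) (Φ0 : Matrix (Fin n) (Fin n) K),
      (∀ a b, Supp 0 (U a b)) ∧ U * U' = 1 ∧ U' * U = 1 ∧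
      Φ0.map C * U'.map (sig τ q hτ hq) = U' * Φ := by
  set Φ0 := Φ.map (fun x => x.c 0) with hΦ0
  set Ψ0 := Ψ.map (fun x => x.c 0) with hΨ0
  have h10 : Φ0 * Ψ0 = 1 := by rw [← c0_matmul hΦ hΨ, h1, c0_one]
  have h20 : Ψ0 * Φ0 = 1 := by rw [← c0_matmul hΨ hΦ, h2, c0_one]
  obtain ⟨U, hUs, hU0, hU⟩ := exists_T τ q hτ hq Φ hΦ hΦb Ψ0 h20
  obtain ⟨T', hTs, hT0, hT⟩ := exists_T τ q hτ hq Ψ.transpose (fun a b => hΨ b a)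
    (fun a b => hΨb b a) Φ0.transpose (by
      have e : Ψ.transpose.map (fun x => x.c 0) = Ψ0.transpose := rfl
      rw [e, ← Matrix.transpose_mul, h20, Matrix.transpose_one])
  set U' := T'.transpose with hU'
  have hT2 : U'.map (sig τ q hτ hq) * Ψ = Ψ0.map C * U' := by
    have := congrArg Matrix.transpose hT
    rw [Matrix.transpose_mul, Matrix.transpose_mul, Matrix.transpose_transpose,
      ← Matrix.transpose_map, ← Matrix.transpose_map, ← Matrix.transpose_map,
      Matrix.transpose_transpose] at this
    exact this
  have hCC : Φ0.map C * Ψ0.map C = (1 : Matrix (Fin n) (Fin n) (Robba K)) := by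
    rw [← Matrix.map_mul, h10]; simp
  have hU'1 : U' = Φ0.map C * U'.map (sig τ q hτ hq) * Ψ := by
    rw [mul_assoc, hT2, ← mul_assoc, hCC, one_mul]
  have hU1 : Φ * U.map (sig τ q hτ hq) = U * Φ0.map C := hU
  have hUU : U * U' - 1 = 0 := by
    refine eq_zero_of_frob τ q hτ hq hΦ hΨ ?_ ?_
    · intro a b i hi
      rcases lt_or_ge i 0 with h | h
      · have := mul_memM (suppSub K) hUs (fun a b => hTs b a) a b i h
        have h3 := one_memM (suppSub K) a b i h
        rw [Matrix.sub_apply, c_sub]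
        rw [h3, sub_zero]; exact this
      · have : i = 0 := by omega
        subst this
        have e : (U * U').map (fun x => x.c 0) = 1 := by
          have hU's : ∀ a b, Supp 0 (U' a b) := fun a b => hTs b a
          rw [c0_matmul hUs hU's, hU0]
          have : U'.map (fun x => x.c 0) = 1 := by
            rw [hU', Matrix.transpose_map, hT0, Matrix.transpose_one]
          rw [this, one_mul]
        have e1 := congrFun (congrFun e a) b
        have e2 := congrFun (congrFun (c0_one (K := K) (n := n)) a) b
        rw [Matrix.map_apply] at e1 e2
        rw [Matrix.sub_apply, c_sub, e1, e2, sub_self]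
    · have e : (U * U' - 1).map (sig τ q hτ hq) =
          U.map (sig τ q hτ hq) * U'.map (sig τ q hτ hq) - 1 := by
        rw [Matrix.map_sub _ (map_sub _), Matrix.map_mul]; simp
      rw [e, mul_sub, sub_mul, mul_one, h1, ← mul_assoc, hU1]
      congr 1
      conv_lhs => rw [hU'1]
      simp only [mul_assoc]
  have hUU' : U * U' = 1 := sub_eq_zero.1 hUU
  refine ⟨U, U', Φ0, hUs, hUU', mul_eq_one_comm.1 hUU', ?_⟩
  conv_rhs => rw [hU'1]
  rw [mul_assoc _ Ψ, h2, mul_one]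

/-! ### support in multiples of `Q` -/
variable (K) in
def smSub (Q : ℤ) : Subring (Robba K) where
  carrier := {x | ∀ i, ¬ Q ∣ i → x.c i = 0}
  mul_mem' := by
    intro x y hx hy n hn
    rw [c_mul]
    unfold conv
    convert tsum_zero with i
    by_cases h : Q ∣ i
    · rw [hy _ (fun h' => hn (by simpa using dvd_add h h')), mul_zero]
    · rw [hx i h, zero_mul]
  add_mem' := fun {x y} hx hy i hi => by rw [c_add, hx i hi, hy i hi, add_zero]
  one_mem' := fun i hi => by
    rw [c_one, if_neg]; rintro rfl; simp at hi
  zero_mem' := fun i _ => rfl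
  neg_mem' := fun {x} hx i hi => by rw [c_neg, hx i hi, neg_zero]

theorem C_mem_sm (Q : ℤ) (a : K) : C a ∈ smSub K Q := fun i hi => by
  rw [c_C, if_neg]; rintro rfl; simp at hi

theorem sig_mem_sm {Q : ℤ} {x : Robba K} (hx : x ∈ smSub K Q) :
    sig τ q hτ hq x ∈ smSub K (q * Q) := by
  intro i hi
  rw [sig_c, sigc]
  split_ifs with h
  · obtain ⟨j, rfl⟩ := h
    have h2 : (q : ℤ) ≠ 0 := by omega
    rw [Int.mul_ediv_cancel_left _ h2, hx j (fun h' => hi (mul_dvd_mul_left _ h')), map_zero]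
  · rfl

open Classical in
def proj (Q s : ℤ) (x : Robba K) : Robba K :=
  mkR (fun i => if Q ∣ i - s then x.c i else 0) (by
    obtain ⟨ρ, h0, h1, h⟩ := x.rob
    refine ⟨ρ, h0, h1, fun r hr hr1 => ?_⟩
    have hrp := h0.trans hr
    refine Summable.of_nonneg_of_le (fun i => by positivity) (fun i => ?_) (h r hr hr1)
    gcongr
    show ‖if Q ∣ i - s then x.c i else 0‖ ≤ _
    split_ifs
    · exact le_rfl
    · rw [norm_zero]; positivity)

open Classical in
theorem proj_c (Q s : ℤ) (x : Robba K) (i : ℤ) :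
    (proj Q s x).c i = if Q ∣ i - s then x.c i else 0 := rfl

theorem proj_mul {Q : ℤ} (s : ℤ) {g : Robba K} (hg : g ∈ smSub K Q) (x : Robba K) :
    proj Q s (g * x) = g * proj Q s x := by
  classical
  refine Robba.ext fun n => ?_
  rw [proj_c, c_mul, c_mul]
  unfold conv
  split_ifs with h
  · refine tsum_congr fun i => ?_
    by_cases hi : Q ∣ i
    · rw [proj_c, if_pos]
      have : n - i - s = (n - s) - i := by ring
      rw [this]; exact dvd_sub h hi
    · rw [hg i hi, zero_mul, zero_mul]
  · symm
    convert tsum_zero with i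
    by_cases hi : Q ∣ i
    · rw [proj_c, if_neg, mul_zero]
      intro h'
      apply h
      have : n - s = (n - i - s) + i := by ring
      rw [this]; exact dvd_add h' hi
    · rw [hg i hi, zero_mul]

theorem proj_tendsto (hq : 2 ≤ q) (x y : Robba K) (s n : ℤ) :
    Tendsto (fun m : ℕ => (proj ((q : ℤ) ^ m) s x * y).c n) atTop
      (𝓝 (x.c s * y.c (n - s))) := by
  classical
  have e : x.c s * y.c (n - s) = ∑' i, if i = s then x.c i * y.c (n - i) else 0 := by
    rw [tsum_eq_single s]
    · simp
    · intro i hi; simp [hi]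
  rw [e]
  simp only [c_mul]
  unfold conv
  obtain ⟨r, hr, h1, h2⟩ := x.rob.exists_conv y.rob
  refine tendsto_tsum_of_dominated_convergence (bound := fun i => ‖x.c i * y.c (n - i)‖)
    (h1.summable_norm hr h2 n) ?_ ?_
  · intro i
    by_cases hi : i = s
    · subst hi
      simp [proj_c]
    · rw [if_neg hi]
      refine tendsto_const_nhds.congr' ?_
      filter_upwards [eventually_ge_atTop (i - s).natAbs] with m hm
      rw [proj_c, if_neg, zero_mul]
      intro hd
      have h3 := Int.natAbs_dvd_natAbs.2 hd
      have h4 := Nat.le_of_dvd (by omega) h3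
      rw [Int.natAbs_pow, Int.natAbs_natCast] at h4
      have h5 : m < q ^ m := Nat.lt_pow_self (by omega)
      omega
  · refine Eventually.of_forall fun m i => ?_
    rw [proj_c]
    split_ifs
    · exact le_rfl
    · simp; positivity

theorem prop_of_proj (hq : 2 ≤ q) {z y : Robba K}
    (h : ∀ (m : ℕ) s, proj ((q : ℤ) ^ m) s z * y = proj ((q : ℤ) ^ m) s y * z) (s t : ℤ) :
    z.c s * y.c t = y.c s * z.c t := by
  have h1 := proj_tendsto q hq z y s (t + s)
  have h2 := proj_tendsto q hq y z s (t + s)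
  simp only [h] at h1
  have := tendsto_nhds_unique h1 h2
  simpa using this

theorem iter_frob {n l : ℕ} (Φ0 : Matrix (Fin n) (Fin n) K) (V : Matrix (Fin n) (Fin l) (Robba K))
    (A Ai : Matrix (Fin l) (Fin l) (Robba K)) (hA : A * Ai = 1)
    (h : Φ0.map C * V.map (sig τ q hτ hq) = V * A) (m : ℕ) :
    ∃ B Bi : Matrix (Fin l) (Fin l) (Robba K), B * Bi = 1 ∧
      ∀ i j, (V * B) i j ∈ smSub K ((q : ℤ) ^ m) := by
  induction m with
  | zero => exact ⟨1, 1, by simp, fun i j k hk => by simp at hk⟩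
  | succ m ih =>
    obtain ⟨B, Bi, hB, hm⟩ := ih
    refine ⟨A * B.map (sig τ q hτ hq), Bi.map (sig τ q hτ hq) * Ai, ?_, ?_⟩
    · have : B.map (sig τ q hτ hq) * Bi.map (sig τ q hτ hq) = 1 := by
        rw [← Matrix.map_mul, hB]; simp
      calc _ = A * (B.map (sig τ q hτ hq) * Bi.map (sig τ q hτ hq)) * Ai := by
            simp only [mul_assoc]
        _ = 1 := by rw [this, mul_one, hA]
    · have e : V * (A * B.map (sig τ q hτ hq)) = Φ0.map C * (V * B).map (sig τ q hτ hq) := by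
        rw [Matrix.map_mul, ← Matrix.mul_assoc, ← h, Matrix.mul_assoc]
      rw [e]
      refine mul_memM _ (fun i j => C_mem_sm _ _) fun i j => ?_
      rw [pow_succ']
      exact sig_mem_sm τ q hτ hq (hm i j)

theorem exists_E {n l : ℕ} (Φ0 : Matrix (Fin n) (Fin n) K) (V : Matrix (Fin n) (Fin l) (Robba K))
    (A Ai : Matrix (Fin l) (Fin l) (Robba K)) (hA : A * Ai = 1)
    (h : Φ0.map C * V.map (sig τ q hτ hq) = V * A) (I : Fin l → Fin n)
    (hI : (V.submatrix I id).det ≠ 0) :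
    ∃ E : Matrix (Fin n) (Fin l) K, V = E.map C * V.submatrix I id := by
  set VI := V.submatrix I id with hVI
  set y := VI.det with hy
  set Z := V * VI.adjugate with hZ
  have key : ∀ a b (m : ℕ) s, proj ((q : ℤ) ^ m) s (Z a b) * y =
      proj ((q : ℤ) ^ m) s y * Z a b := by
    intro a b m s
    obtain ⟨B, Bi, hB, hm⟩ := iter_frob τ q hτ hq Φ0 V A Ai hA h m
    have hBd : B.det ≠ 0 := by
      intro h0
      have := congrArg Matrix.det hB
      rw [Matrix.det_mul, h0, zero_mul, Matrix.det_one] at this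
      exact zero_ne_one this
    set X := V * B with hX
    have hXI : X.submatrix I id = VI * B := by
      rw [hX, hVI, Matrix.submatrix_mul _ _ I id id Function.bijective_id]; simp
    set y2 := (X.submatrix I id).det with hy2
    have hy2e : y2 = y * B.det := by rw [hy2, hXI, Matrix.det_mul]
    have hy2m : y2 ∈ smSub K ((q : ℤ) ^ m) := det_memM _ fun i j => hm _ _
    set Z2 := X * (X.submatrix I id).adjugate with hZ2
    have hZ2m : Z2 a b ∈ smSub K ((q : ℤ) ^ m) :=
      mul_memM _ hm (adj_memM _ fun i j => hm _ _) a b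
    have hZ2e : Z2 = B.det • Z := by
      rw [hZ2, hXI, Matrix.adjugate_mul_distrib, hX, hZ, Matrix.mul_assoc V, ← Matrix.mul_assoc B,
        Matrix.mul_adjugate, Matrix.smul_mul, Matrix.one_mul, Matrix.mul_smul]
    have hZ2ab : Z2 a b = B.det * Z a b := by rw [hZ2e]; rfl
    have e1 : y2 * Z a b = Z2 a b * y := by rw [hy2e, hZ2ab]; ring
    have e2 := congrArg (proj ((q : ℤ) ^ m) s) e1
    rw [proj_mul s hy2m, proj_mul s hZ2m] at e2
    have hy20 : y2 ≠ 0 := by rw [hy2e]; exact mul_ne_zero hI hBd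
    apply mul_left_cancel₀ hy20
    calc y2 * (proj ((q : ℤ) ^ m) s (Z a b) * y) = (y2 * proj ((q : ℤ) ^ m) s (Z a b)) * y := by ring
      _ = (Z2 a b * y) * proj ((q : ℤ) ^ m) s y := by rw [e2]; ring
      _ = _ := by rw [← e1]; ring
  obtain ⟨s0, hs0⟩ := Function.ne_iff.1 (c_ne_zero hI)
  have hs0' : y.c s0 ≠ 0 := hs0
  set E : Matrix (Fin n) (Fin l) K := Matrix.of fun a b => (Z a b).c s0 / y.c s0 with hE
  have hZE : Z = y • E.map C := by
    ext a b
    refine Robba.ext fun t => ?_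
    rw [Matrix.smul_apply, Matrix.map_apply, smul_eq_mul, mul_comm, c_C_mul]
    have := prop_of_proj q hq (key a b) s0 t
    show _ = (Z a b).c s0 / y.c s0 * y.c t
    rw [div_mul_eq_mul_div, this]
    field_simp
  refine ⟨E, ?_⟩
  have e : y • V = y • (E.map C * VI) := by
    rw [← Matrix.smul_mul, ← hZE, hZ, Matrix.mul_assoc, Matrix.adjugate_mul]
    rw [Matrix.mul_smul, Matrix.mul_one]
  ext a b
  have := congrFun (congrFun e a) b
  exact mul_left_cancel₀ hI this

/-- core theorem -/
theorem core {n l : ℕ} (Φ Ψ : Matrix (Fin n) (Fin n) (Robba K))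
    (hΦ : ∀ a b, Supp 0 (Φ a b)) (hΨ : ∀ a b, Supp 0 (Ψ a b))
    (hΦb : ∀ a b, Bdd (Φ a b)) (hΨb : ∀ a b, Bdd (Ψ a b))
    (h1 : Φ * Ψ = 1) (h2 : Ψ * Φ = 1)
    (V : Matrix (Fin n) (Fin l) (Robba K)) (hVb : ∀ a b, Bdd (V a b))
    (L : Matrix (Fin l) (Fin n) (Robba K)) (hL : L * V = 1)
    (A Ai : Matrix (Fin l) (Fin l) (Robba K)) (hA : A * Ai = 1)
    (hV : Φ * V.map (sig τ q hτ hq) = V * A) :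
    ∃ (J : Fin l → Fin n) (P : Matrix (Fin n) (Fin l) (Robba K)) (y : Robba K),
      y ≠ 0 ∧ (∀ a b, Supp 0 (P a b)) ∧ (∀ a b, Bdd (P a b)) ∧
      P.submatrix J id = y • 1 ∧ P * V.submatrix J id = y • V := by
  obtain ⟨U, U', Φ0, hUs, hUU', hU'U, hU⟩ := exists_U τ q hτ hq Φ Ψ hΦ hΨ hΦb hΨb h1 h2
  set V' := U' * V with hV'
  have hVV : U * V' = V := by rw [hV', ← Matrix.mul_assoc, hUU', Matrix.one_mul]
  have hV'F : Φ0.map C * V'.map (sig τ q hτ hq) = V' * A := by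
    rw [hV', Matrix.map_mul, ← Matrix.mul_assoc, hU, Matrix.mul_assoc, hV, Matrix.mul_assoc]
  obtain ⟨I, hI⟩ := rank_lemma (L * U) V' (by rw [Matrix.mul_assoc, hVV, hL])
  obtain ⟨E, hE⟩ := exists_E τ q hτ hq Φ0 V' A Ai hA hV'F I hI
  set B := V'.submatrix I id with hB
  set X := U * E.map C with hX
  have hXs : ∀ a b, Supp 0 (X a b) := mul_memM (suppSub K) hUs fun a b => C_mem_supp _
  have hVX : V = X * B := by rw [hX, Matrix.mul_assoc, ← hE, hVV]
  obtain ⟨J, hJ⟩ := rank_lemma L V hL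
  set Y := X.submatrix J id with hY
  have hVJ : V.submatrix J id = Y * B := by
    conv_lhs => rw [hVX]
    rw [Matrix.submatrix_mul _ _ J id id Function.bijective_id]; simp [hY]
  have hdet : Y.det * B.det = (V.submatrix J id).det := by rw [hVJ, Matrix.det_mul]
  have hy : Y.det ≠ 0 := by
    intro h0
    rw [h0, zero_mul] at hdet
    exact hJ hdet.symm
  set P := X * Y.adjugate with hP
  have hPs : ∀ a b, Supp 0 (P a b) :=
    mul_memM (suppSub K) hXs (adj_memM (suppSub K) fun i j => hXs _ _)
  have hPB : V * (V.submatrix J id).adjugate = B.det • P := by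
    rw [hVJ, Matrix.adjugate_mul_distrib]
    conv_lhs => rw [hVX]
    rw [Matrix.mul_assoc X, ← Matrix.mul_assoc B, Matrix.mul_adjugate, Matrix.smul_mul,
      Matrix.one_mul, Matrix.mul_smul]
  refine ⟨J, P, Y.det, hy, hPs, ?_, ?_, ?_⟩
  · intro a b
    refine bdd_of_mul (hPs a b) hI (e := (V * (V.submatrix J id).adjugate) a b) ?_ ?_
    · exact mul_memM (bddSub K) hVb (adj_memM (bddSub K) fun i j => hVb _ _) a b
    · rw [hPB, mul_comm]; rfl
  · rw [hP, Matrix.submatrix_mul _ _ J id id Function.bijective_id]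
    rw [← hY, Matrix.submatrix_id_id, Matrix.mul_adjugate]
  · rw [hP, hVJ, Matrix.mul_assoc, ← Matrix.mul_assoc _ Y, Matrix.adjugate_mul, Matrix.smul_mul,
      Matrix.one_mul, Matrix.mul_smul, ← hVX]

end Rob

namespace Rob
open Filter Topology

section wf
variable (p : ℕ) [hp : Fact p.Prime] (k : Type*) [Field k] [CharP k p] [PerfectRing k p]

abbrev KW : Type _ := FractionRing (WittVector p k)

def abvW : AbsoluteValue (KW p k) ℝ :=
  IsDedekindDomain.HeightOneSpectrum.adicAbv
    (IsDiscreteValuationRing.maximalIdeal (WittVector p k)) (b := 2) (by norm_num)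

instance normW : NormedField (KW p k) := AbsoluteValue.toNormedField (abvW p k)

theorem norm_defW (x : KW p k) : ‖x‖ = abvW p k x := rfl

instance ultraW : IsUltrametricDist (KW p k) :=
  IsUltrametricDist.isUltrametricDist_of_isNonarchimedean_norm
    (IsDedekindDomain.HeightOneSpectrum.isNonarchimedean_adicAbv
      (IsDiscreteValuationRing.maximalIdeal (WittVector p k)) (by norm_num))

abbrev wK : WittVector p k →+* KW p k := algebraMap _ _

theorem wK_inj : Function.Injective (wK p k) := IsFractionRing.injective _ _

variable {p k}

theorem norm_wK_le (a : WittVector p k) : ‖wK p k a‖ ≤ 1 :=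
  IsDedekindDomain.HeightOneSpectrum.adicAbv_coe_le_one _ _ _

theorem norm_unit (b : (WittVector p k)ˣ) : ‖wK p k b‖ = 1 := by
  apply le_antisymm (norm_wK_le _)
  have h : ‖wK p k b‖ * ‖wK p k ↑b⁻¹‖ = 1 := by
    rw [← norm_mul, ← map_mul, Units.mul_inv, map_one, norm_one]
  have h1 := norm_wK_le (p := p) (k := k) ↑b⁻¹
  nlinarith [norm_nonneg (wK p k b)]

theorem p_neW : (p : WittVector p k) ≠ 0 := (WittVector.irreducible p).ne_zero

theorem p_neK : (p : KW p k) ≠ 0 := by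
  have := (map_ne_zero_iff _ (wK_inj p k)).2 (p_neW (p := p) (k := k))
  simpa using this

theorem norm_p_pos : 0 < ‖(p : KW p k)‖ := norm_pos_iff.2 p_neK

theorem norm_p_lt : ‖(p : KW p k)‖ < 1 := by
  have h := (IsDedekindDomain.HeightOneSpectrum.adicAbv_coe_lt_one_iff (K := KW p k)
    (IsDiscreteValuationRing.maximalIdeal (WittVector p k)) (b := 2) (by norm_num)
    (p : WittVector p k)).2 (by
      show _ ∈ IsLocalRing.maximalIdeal _
      rw [IsLocalRing.mem_maximalIdeal]
      exact (WittVector.irreducible p).not_isUnit)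
  rw [map_natCast] at h
  exact h

theorem norm_wK_iff (a : WittVector p k) (j : ℕ) :
    ‖wK p k a‖ ≤ ‖(p : KW p k)‖ ^ j ↔ (p : WittVector p k) ^ j ∣ a := by
  constructor
  · intro h
    by_cases ha : a = 0
    · rw [ha]; exact dvd_zero _
    obtain ⟨m, b, hb⟩ := WittVector.exists_eq_pow_p_mul' a ha
    rw [hb, map_mul, norm_mul, norm_unit, mul_one, map_pow, map_natCast, norm_pow] at h
    have : j ≤ m := (pow_le_pow_iff_right_of_lt_one₀ norm_p_pos norm_p_lt).1 h
    rw [hb]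
    exact (pow_dvd_pow _ this).mul_right _
  · rintro ⟨b, rfl⟩
    rw [map_mul, norm_mul, map_pow, map_natCast, norm_pow]
    exact mul_le_of_le_one_right (by positivity) (norm_wK_le b)

theorem exists_pow_mul (x : KW p k) : ∃ (j : ℕ) (a : WittVector p k),
    (p : KW p k) ^ j * x = wK p k a := by
  obtain ⟨a, b, hb, rfl⟩ := IsFractionRing.div_surjective (A := WittVector p k) x
  have hb0 : b ≠ 0 := nonZeroDivisors.ne_zero hb
  obtain ⟨m, c, hc⟩ := WittVector.exists_eq_pow_p_mul' b hb0
  refine ⟨m, a * ↑c⁻¹, ?_⟩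
  have h1 : wK p k b = (p : KW p k) ^ m * wK p k c := by rw [hc]; simp
  have h2 : wK p k c * wK p k ↑c⁻¹ = 1 := by rw [← map_mul, Units.mul_inv, map_one]
  have hbn : wK p k b ≠ 0 := (map_ne_zero_iff _ (wK_inj p k)).2 hb0
  rw [map_mul, mul_div_assoc', div_eq_iff hbn, h1]
  linear_combination -(p : KW p k) ^ m * wK p k a * h2

theorem exists_of_norm_le {x : KW p k} {j : ℕ} (h : ‖(p : KW p k) ^ j * x‖ ≤ 1) :
    ∃ a, (p : KW p k) ^ j * x = wK p k a := by
  set z := (p : KW p k) ^ j * x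
  obtain ⟨m, a, ha⟩ := exists_pow_mul z
  have h1 : ‖wK p k a‖ ≤ ‖(p : KW p k)‖ ^ m := by
    rw [← ha, norm_mul, norm_pow]
    exact mul_le_of_le_one_right (by positivity) h
  obtain ⟨b, rfl⟩ := (norm_wK_iff a m).1 h1
  refine ⟨b, ?_⟩
  rw [map_mul, map_pow, map_natCast] at ha
  exact mul_left_cancel₀ (pow_ne_zero _ p_neK) ha

theorem exists_norm_le_one (B : ℝ) : ∃ j : ℕ, ∀ x : KW p k, ‖x‖ ≤ B → ‖(p : KW p k) ^ j * x‖ ≤ 1 := by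
  obtain ⟨j, hj⟩ := exists_pow_lt_of_lt_one (show (0 : ℝ) < (max B 1)⁻¹ by positivity)
    (norm_p_lt (p := p) (k := k))
  refine ⟨j, fun x hx => ?_⟩
  rw [norm_mul, norm_pow]
  calc _ ≤ (max B 1)⁻¹ * max B 1 := by
        gcongr
        exact hx.trans (le_max_left _ _)
    _ = 1 := inv_mul_cancel₀ (by positivity)

instance completeW : CompleteSpace (KW p k) := by
  refine Metric.complete_of_cauchySeq_tendsto fun u hu => ?_
  obtain ⟨B, hB⟩ := hu.norm_bddAbove
  obtain ⟨j, hj⟩ := exists_norm_le_one (p := p) (k := k) B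
  have hW : ∀ n, ∃ a, (p : KW p k) ^ j * u n = wK p k a := fun n =>
    exists_of_norm_le (hj _ (hB ⟨n, rfl⟩))
  choose a ha using hW
  have hpj : 0 < ‖(p : KW p k)‖ ^ j := pow_pos norm_p_pos _
  have hN : ∀ m : ℕ, ∃ N, ∀ n ≥ N, ∀ n' ≥ N, (p : WittVector p k) ^ m ∣ a n - a n' := by
    intro m
    obtain ⟨N, hN⟩ := Metric.cauchySeq_iff.1 hu (‖(p : KW p k)‖ ^ m) (pow_pos norm_p_pos _)
    refine ⟨N, fun n hn n' hn' => (norm_wK_iff _ _).1 ?_⟩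
    rw [map_sub, ← ha, ← ha, ← mul_sub, norm_mul, norm_pow]
    have h1 := hN n hn n' hn'
    rw [dist_eq_norm] at h1
    have h2 : ‖(p : KW p k)‖ ^ j ≤ 1 := pow_le_one₀ norm_p_pos.le norm_p_lt.le
    calc _ ≤ 1 * ‖u n - u n'‖ := by gcongr
      _ ≤ _ := by rw [one_mul]; exact h1.le
  choose N hN using hN
  have hmem : ∀ (m : ℕ) (x y : WittVector p k), x ≡ y [SMOD ((Ideal.span {(p : WittVector p k)}) ^ m •
      (⊤ : Submodule (WittVector p k) (WittVector p k)))] ↔ (p : WittVector p k) ^ m ∣ x - y := by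
    intro m x y
    rw [SModEq.sub_mem, smul_eq_mul, Ideal.mul_top, Ideal.span_singleton_pow,
      Ideal.mem_span_singleton]
  have hpre : IsPrecomplete (Ideal.span {(p : WittVector p k)}) (WittVector p k) := inferInstance
  obtain ⟨L, hL⟩ := hpre.prec (f := fun m => a (N m)) (by
    intro m m' hmm
    rw [hmem]
    have h1 := hN m (N m) le_rfl (max (N m) (N m')) (le_max_left _ _)
    have h2 := hN m' (max (N m) (N m')) (le_max_right _ _) (N m') le_rfl
    simpa using dvd_add h1 ((pow_dvd_pow _ hmm).trans h2))
  refine ⟨wK p k L / (p : KW p k) ^ j, ?_⟩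
  rw [Metric.tendsto_atTop]
  intro ε hε
  obtain ⟨m, hm⟩ := exists_pow_lt_of_lt_one (mul_pos hε hpj) (norm_p_lt (p := p) (k := k))
  refine ⟨N m, fun n hn => ?_⟩
  have h1 := hN m n hn (N m) le_rfl
  have h2 := (hmem _ _ _).1 (hL m)
  have h3 : (p : WittVector p k) ^ m ∣ a n - L := by simpa using dvd_add h1 h2
  have h4 := (norm_wK_iff _ _).2 h3
  rw [dist_eq_norm]
  have e : u n - wK p k L / (p : KW p k) ^ j = wK p k (a n - L) / (p : KW p k) ^ j := by
    rw [map_sub, ← ha, sub_div, mul_div_cancel_left₀ _ (pow_ne_zero _ p_neK)]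
  rw [e, norm_div, norm_pow, div_lt_iff₀ hpj]
  exact h4.trans_lt hm

variable (p k) in
def tauW (f : ℕ) : KW p k →+* KW p k :=
  IsFractionRing.lift (g := (wK p k).comp
    ((WittVector.frobenius : WittVector p k →+* WittVector p k) ^ f)) (by
      rw [RingHom.coe_comp]
      refine (wK_inj p k).comp ?_
      rw [RingHom.coe_pow]
      exact (WittVector.frobenius_bijective p k).injective.iterate f)

theorem tauW_wK (f : ℕ) (a : WittVector p k) : tauW p k f (wK p k a) =
    wK p k (((WittVector.frobenius : WittVector p k →+* WittVector p k) ^ f) a) :=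
  IsFractionRing.lift_algebraMap _ _

theorem norm_tauW (f : ℕ) (x : KW p k) : ‖tauW p k f x‖ = ‖x‖ := by
  obtain ⟨j, a, ha⟩ := exists_pow_mul x
  have key : ∀ a, ‖tauW p k f (wK p k a)‖ = ‖wK p k a‖ := by
    intro a
    by_cases h0 : a = 0
    · simp [h0]
    obtain ⟨m, b, hb⟩ := WittVector.exists_eq_pow_p_mul' a h0
    have e : wK p k a = (p : KW p k) ^ m * wK p k b := by rw [hb]; simp
    rw [e, map_mul, map_pow, map_natCast, norm_mul, norm_mul, norm_unit, tauW_wK]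
    have : (((WittVector.frobenius : WittVector p k →+* WittVector p k) ^ f) b) =
      ((Units.map (((WittVector.frobenius : WittVector p k →+* WittVector p k) ^ f :
        WittVector p k →+* WittVector p k) : WittVector p k →* WittVector p k) b : (WittVector p k)ˣ) : WittVector p k) := rfl
    rw [this, norm_unit]
  have h1 := key a
  rw [← ha, map_mul, map_pow, map_natCast, norm_mul, norm_mul] at h1
  exact mul_left_cancel₀ (norm_ne_zero_iff.2 (pow_ne_zero _ p_neK)) h1

end wf
end Rob

set_option synthInstance.maxHeartbeats 1000000
namespace Rob
open Filter Topology

theorem mul_le_a {a b c : ℝ} (h1 : a ≤ c) (h2 : b ≤ 1) (hb : 0 ≤ b) (hc : 0 ≤ c) : a * b ≤ c :=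
  (mul_le_mul h1 h2 hb hc).trans_eq (mul_one _)

theorem mul_le_b {a b c : ℝ} (h1 : a ≤ 1) (h2 : b ≤ c) (hb : 0 ≤ b) : a * b ≤ c :=
  (mul_le_mul h1 h2 hb zero_le_one).trans_eq (one_mul _)

structure CS (p : ℕ) [Fact p.Prime] (k : Type*) [Field k] [CharP k p] where
  co : ℤ → GammaRing p k →+ WittVector p k
  laurent : ∀ (g : LaurentSeries (WittVector p k)) (i : ℤ),
      co i (laurentToGamma p k g) = g.coeff i
  inj : ∀ x : GammaRing p k, (∀ i, co i x = 0) → x = 0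
  cont : ∀ (x y : GammaRing p k) (j : ℕ), (p : GammaRing p k) ^ j ∣ x - y →
        ∀ i, (p : WittVector p k) ^ j ∣ co i x - co i y
  dense : ∀ (x : GammaRing p k) (j : ℕ), ∃ g : LaurentSeries (WittVector p k),
      (p : GammaRing p k) ^ j ∣ x - laurentToGamma p k g
  surj : ∀ a : ℤ → WittVector p k,
      (∀ j : ℕ, ∃ N : ℤ, ∀ i ≤ N, (p : WittVector p k) ^ j ∣ a i) →
        ∃ x : GammaRing p k, ∀ i, co i x = a i

namespace CS
variable {p : ℕ} [hp : Fact p.Prime] {k : Type*} [Field k] [CharP k p] [PerfectRing k p]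
variable (S : CS p k)

theorem co_pmul (j : ℕ) (x : GammaRing p k) (i : ℤ) :
    S.co i ((p : GammaRing p k) ^ j * x) = (p : WittVector p k) ^ j * S.co i x := by
  have e : (p : GammaRing p k) ^ j * x = (p ^ j : ℕ) • x := by
    rw [nsmul_eq_mul]; push_cast; rfl
  rw [e, map_nsmul, nsmul_eq_mul]; push_cast; rfl

theorem ext' {x y : GammaRing p k} (h : ∀ i, S.co i x = S.co i y) : x = y :=
  sub_eq_zero.1 (S.inj _ fun i => by rw [map_sub, h, sub_self])

theorem laurent_low (g : LaurentSeries (WittVector p k)) : ∃ N : ℤ, ∀ i ≤ N, g.coeff i = 0 := by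
  refine ⟨g.order - 1, fun i hi => HahnSeries.coeff_eq_zero_of_lt_order (by omega)⟩

theorem decay (x : GammaRing p k) (j : ℕ) : ∃ N : ℤ, ∀ i ≤ N, (p : WittVector p k) ^ j ∣ S.co i x := by
  obtain ⟨g, hg⟩ := S.dense x j
  obtain ⟨N, hN⟩ := laurent_low g
  refine ⟨N, fun i hi => ?_⟩
  have := S.cont _ _ j hg i
  rwa [S.laurent, hN i hi, sub_zero] at this

theorem dvd_iff (x : GammaRing p k) (j : ℕ) :
    (p : GammaRing p k) ^ j ∣ x ↔ ∀ i, (p : WittVector p k) ^ j ∣ S.co i x := by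
  constructor
  · intro h i
    simpa using S.cont x 0 j (by simpa using h) i
  · intro h
    choose a ha using h
    obtain ⟨y, hy⟩ := S.surj a (by
      intro m
      obtain ⟨N, hN⟩ := S.decay x (j + m)
      refine ⟨N, fun i hi => ?_⟩
      have := hN i hi
      rw [ha, pow_add] at this
      exact (mul_dvd_mul_iff_left (pow_ne_zero _ p_neW)).1 this)
    refine ⟨y, S.ext' fun i => ?_⟩
    rw [S.co_pmul, hy, ha]

theorem p_cancel (S : CS p k) {j : ℕ} {x y : GammaRing p k}
    (h : (p : GammaRing p k) ^ j * x = (p : GammaRing p k) ^ j * y) : x = y := by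
  refine S.ext' fun i => ?_
  have := congrArg (S.co i) h
  rw [S.co_pmul, S.co_pmul] at this
  exact mul_left_cancel₀ (pow_ne_zero _ p_neW) this

/-- coefficients in K -/
def cK (x : GammaRing p k) (i : ℤ) : KW p k := wK p k (S.co i x)

theorem cK_norm (x : GammaRing p k) (i : ℤ) : ‖S.cK x i‖ ≤ 1 := norm_wK_le _

theorem cK_sub (x y : GammaRing p k) (i : ℤ) : S.cK (x - y) i = S.cK x i - S.cK y i := by
  simp [cK]

theorem cK_add (x y : GammaRing p k) (i : ℤ) : S.cK (x + y) i = S.cK x i + S.cK y i := by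
  simp [cK]

theorem cK_pmul (j : ℕ) (x : GammaRing p k) (i : ℤ) :
    S.cK ((p : GammaRing p k) ^ j * x) i = (p : KW p k) ^ j * S.cK x i := by
  simp [cK, co_pmul]

theorem cK_inj {x y : GammaRing p k} (h : ∀ i, S.cK x i = S.cK y i) : x = y :=
  S.ext' fun i => wK_inj p k (h i)

theorem cK_dvd (x : GammaRing p k) (j : ℕ) :
    (p : GammaRing p k) ^ j ∣ x ↔ ∀ i, ‖S.cK x i‖ ≤ ‖(p : KW p k)‖ ^ j := by
  rw [S.dvd_iff]
  exact forall_congr' fun i => (norm_wK_iff _ _).symm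

theorem eq_zero_of_pow {a : KW p k} (h : ∀ j : ℕ, ‖a‖ ≤ ‖(p : KW p k)‖ ^ j) : a = 0 := by
  rw [← norm_le_zero_iff]
  exact ge_of_tendsto' (tendsto_pow_atTop_nhds_zero_of_lt_one (norm_nonneg _) norm_p_lt) h

theorem cK_tendsto (x y : GammaRing p k) (n : ℤ) :
    Tendsto (fun i => S.cK x i * S.cK y (n - i)) cofinite (𝓝 0) := by
  rw [Metric.tendsto_nhds]
  intro ε hε
  obtain ⟨j, hj⟩ := exists_pow_lt_of_lt_one hε (norm_p_lt (p := p) (k := k))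
  obtain ⟨N, hN⟩ := S.decay x j
  obtain ⟨M, hM⟩ := S.decay y j
  rw [Filter.eventually_cofinite]
  refine (Set.finite_Icc N (n - M)).subset fun i hi => ?_
  by_contra hout
  apply hi
  rw [dist_zero_right, norm_mul]
  have h1 := S.cK_norm x i
  have h2 := S.cK_norm y (n - i)
  rw [Set.mem_Icc, not_and_or] at hout
  rcases hout with h | h
  · have := (norm_wK_iff _ _).2 (hN i (by omega))
    calc _ ≤ ‖(p : KW p k)‖ ^ j * 1 := mul_le_mul this h2 (norm_nonneg _) (by positivity)
      _ < ε := by simpa using hj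
  · have := (norm_wK_iff _ _).2 (hM (n - i) (by omega))
    calc _ ≤ 1 * ‖(p : KW p k)‖ ^ j := mul_le_mul h1 this (norm_nonneg _) (by positivity)
      _ < ε := by simpa using hj

theorem cK_summable (x y : GammaRing p k) (n : ℤ) :
    Summable (fun i => S.cK x i * S.cK y (n - i)) :=
  NonarchimedeanAddGroup.summable_of_tendsto_cofinite_zero (S.cK_tendsto x y n)

theorem laurent_mul (g h : LaurentSeries (WittVector p k)) (n : ℤ) :
    wK p k ((g * h).coeff n) = ∑' i, wK p k (g.coeff i) * wK p k (h.coeff (n - i)) := by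
  classical
  rw [HahnSeries.coeff_mul, map_sum]
  symm
  rw [tsum_eq_sum (s := (Finset.addAntidiagonal g.isPWO_support h.isPWO_support n).image Prod.fst)]
  · rw [Finset.sum_image]
    · refine Finset.sum_congr rfl fun ij hij => ?_
      have hij' := (Finset.mem_addAntidiagonal.1 hij).2.2
      have : n - ij.1 = ij.2 := by omega
      rw [this, map_mul]
    · intro a ha b hb hab
      have ha' := (Finset.mem_addAntidiagonal.1 ha).2.2
      have hb' := (Finset.mem_addAntidiagonal.1 hb).2.2
      ext
      · exact hab
      · omega
  · intro i hi
    by_contra h0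
    apply hi
    rw [Finset.mem_image]
    refine ⟨(i, n - i), ?_, rfl⟩
    refine Finset.mem_addAntidiagonal.2 ⟨fun h => h0 (by simp [h]), fun h => h0 (by simp [h]), by simp⟩

theorem cK_mul (x y : GammaRing p k) (n : ℤ) : S.cK (x * y) n = conv (S.cK x) (S.cK y) n := by
  unfold conv
  rw [← sub_eq_zero]
  refine eq_zero_of_pow fun j => ?_
  obtain ⟨g, hg⟩ := S.dense x j
  obtain ⟨h, hh⟩ := S.dense y j
  set g' := laurentToGamma p k g
  set h' := laurentToGamma p k h
  have e1 : (p : GammaRing p k) ^ j ∣ x * y - g' * h' := by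
    have : x * y - g' * h' = (x - g') * y + g' * (y - h') := by ring
    rw [this]
    exact dvd_add (hg.mul_right _) (hh.mul_left _)
  have e2 : S.cK (g' * h') n = ∑' i, S.cK g' i * S.cK h' (n - i) := by
    have e : g' * h' = laurentToGamma p k (g * h) := (map_mul _ _ _).symm
    simp only [cK]
    rw [e, S.laurent, laurent_mul]
    simp only [g', h', S.laurent]
  have e3 : S.cK (x * y) n - ∑' i, S.cK x i * S.cK y (n - i) =
      S.cK (x * y - g' * h') n + ∑' i, (S.cK (g' - x) i * S.cK h' (n - i) +
        S.cK x i * S.cK (h' - y) (n - i)) := by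
    rw [cK_sub, e2]
    have : (fun i => S.cK (g' - x) i * S.cK h' (n - i) + S.cK x i * S.cK (h' - y) (n - i)) =
        fun i => S.cK g' i * S.cK h' (n - i) - S.cK x i * S.cK y (n - i) := by
      ext i; rw [cK_sub, cK_sub]; ring
    rw [this, Summable.tsum_sub (S.cK_summable _ _ _) (S.cK_summable _ _ _)]
    ring
  rw [e3]
  have hω : 0 ≤ ‖(p : KW p k)‖ ^ j := by positivity
  refine (IsUltrametricDist.norm_add_le_max _ _).trans (max_le ((S.cK_dvd _ _).1 e1 n) ?_)
  refine IsUltrametricDist.norm_tsum_le_of_forall_le fun i => ?_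
  refine (IsUltrametricDist.norm_add_le_max _ _).trans (max_le ?_ ?_)
  · rw [norm_mul]
    refine mul_le_a ((S.cK_dvd _ _).1 ?_ i) (S.cK_norm _ _) (norm_nonneg _) hω
    rw [← dvd_neg, neg_sub]; exact hg
  · rw [norm_mul]
    refine mul_le_b (S.cK_norm _ _) ((S.cK_dvd _ _).1 ?_ _) (norm_nonneg _)
    rw [← dvd_neg, neg_sub]; exact hh

theorem exists_first {x : GammaRing p k} (hx : ¬ (p : GammaRing p k) ∣ x) :
    ∃ a, ‖S.cK x a‖ = 1 ∧ ∀ i < a, ‖S.cK x i‖ ≤ ‖(p : KW p k)‖ := by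
  classical
  have h1 : ¬ ∀ i, ‖S.cK x i‖ ≤ ‖(p : KW p k)‖ ^ 1 := by
    rw [← S.cK_dvd, pow_one]; exact hx
  push Not at h1
  rw [pow_one] at h1
  obtain ⟨N, hN⟩ := S.decay x 1
  obtain ⟨a, ha, hmin⟩ := Int.exists_least_of_bdd
    (P := fun i => ‖(p : KW p k)‖ < ‖S.cK x i‖) ⟨N, fun z hz => by
      by_contra hlt
      have := (norm_wK_iff _ _).2 (hN z (by omega))
      rw [pow_one] at this
      exact absurd hz (not_lt.2 this)⟩ h1
  refine ⟨a, ?_, fun i hi => ?_⟩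
  · have hnd : ¬ (p : WittVector p k) ∣ S.co a x := by
      intro hd
      have := (norm_wK_iff (S.co a x) 1).2 (by simpa using hd)
      rw [pow_one] at this
      exact absurd ha (not_lt.2 this)
    by_cases h0 : S.co a x = 0
    · exact absurd (h0 ▸ dvd_zero _) hnd
    obtain ⟨m, b, hb⟩ := WittVector.exists_eq_pow_p_mul' _ h0
    have hm : m = 0 := by
      by_contra hm
      exact hnd (hb ▸ (dvd_pow_self _ hm).mul_right _)
    subst hm
    rw [pow_zero, one_mul] at hb
    rw [cK, hb, norm_unit]
  · by_contra h
    have := hmin i (not_le.1 h)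
    omega

theorem p_prime (S : CS p k) {x y : GammaRing p k} (h : (p : GammaRing p k) ∣ x * y) :
    (p : GammaRing p k) ∣ x ∨ (p : GammaRing p k) ∣ y := by
  classical
  by_contra hh
  push Not at hh
  obtain ⟨a, ha, ha'⟩ := S.exists_first hh.1
  obtain ⟨b, hb, hb'⟩ := S.exists_first hh.2
  have h1 := (S.cK_dvd (x * y) 1).1 (by simpa using h) (a + b)
  rw [pow_one, cK_mul, conv, (S.cK_summable x y (a + b)).tsum_eq_add_tsum_ite a] at h1
  have h2 : ‖∑' i, (if i = a then 0 else S.cK x i * S.cK y (a + b - i))‖ ≤ ‖(p : KW p k)‖ := by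
    refine IsUltrametricDist.norm_tsum_le_of_forall_le fun i => ?_
    split_ifs with hi
    · simp
    rw [norm_mul]
    rcases lt_or_gt_of_ne hi with h | h
    · exact mul_le_a (ha' i h) (S.cK_norm _ _) (norm_nonneg _) (norm_nonneg _)
    · exact mul_le_b (S.cK_norm _ _) (hb' _ (by omega)) (norm_nonneg _)
  have h3 : ‖S.cK x a * S.cK y (a + b - a)‖ = 1 := by
    rw [norm_mul, ha]; simp [hb]
  have h4 := norm_p_lt (p := p) (k := k)
  have h5 := IsUltrametricDist.norm_add_le_max
    (S.cK x a * S.cK y (a + b - a) +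
      ∑' i, (if i = a then 0 else S.cK x i * S.cK y (a + b - i)))
    (-∑' i, (if i = a then 0 else S.cK x i * S.cK y (a + b - i)))
  rw [add_neg_cancel_right, h3, norm_neg] at h5
  have := h5.trans (max_le h1 h2)
  linarith

theorem exists_pow (S : CS p k) {x : GammaRing p k} (hx : x ≠ 0) : ∃ (j : ℕ) (y : GammaRing p k),
    ¬ (p : GammaRing p k) ∣ y ∧ x = (p : GammaRing p k) ^ j * y := by
  have h1 : ∃ j, ¬ (p : GammaRing p k) ^ j ∣ x := by
    by_contra h
    push Not at h
    refine hx (S.cK_inj fun i => ?_)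
    rw [eq_zero_of_pow fun j => (S.cK_dvd x j).1 (h j) i]
    simp [cK]
  classical
  obtain ⟨j, hj⟩ : ∃ j, Nat.find h1 = j + 1 := by
    refine Nat.exists_eq_succ_of_ne_zero fun h0 => ?_
    have := Nat.find_spec h1
    rw [h0] at this
    simp at this
  have h2 : (p : GammaRing p k) ^ j ∣ x := by
    by_contra h
    have := Nat.find_min' h1 h
    omega
  obtain ⟨y, rfl⟩ := h2
  refine ⟨j, y, fun ⟨z, hz⟩ => ?_, rfl⟩
  have := Nat.find_spec h1
  rw [hj] at this
  exact this ⟨z, by rw [hz]; ring⟩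

theorem isDomain (S : CS p k) : IsDomain (GammaRing p k) := by
  have hn : Nontrivial (GammaRing p k) := ⟨0, 1, fun h => by
    have h1 := S.laurent 0 0
    have h2 := S.laurent 1 0
    rw [map_zero, h, ← map_one (laurentToGamma p k), h2] at h1
    simp at h1⟩
  have : NoZeroDivisors (GammaRing p k) := ⟨by
    intro x y h
    by_contra hh
    push Not at hh
    obtain ⟨a, x', hx', rfl⟩ := S.exists_pow hh.1
    obtain ⟨b, y', hy', rfl⟩ := S.exists_pow hh.2
    have h1 : (p : GammaRing p k) ^ (a + b) * (x' * y') = (p : GammaRing p k) ^ (a + b) * 0 := by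
      rw [mul_zero, ← h]; ring
    have h2 := S.p_cancel h1
    rcases S.p_prime (h2 ▸ dvd_zero _ : (p : GammaRing p k) ∣ x' * y') with h | h
    exacts [hx' h, hy' h]⟩
  exact NoZeroDivisors.to_isDomain _

end CS
end Rob

set_option synthInstance.maxHeartbeats 1000000
namespace Rob
open Filter Topology
namespace CS
variable {p : ℕ} [hp : Fact p.Prime] {k : Type*} [Field k] [CharP k p] [PerfectRing k p]
variable (S : CS p k)

theorem smod_iff {R : Type*} [CommRing R] (r : R) (m : ℕ) (x y : R) :
    x ≡ y [SMOD ((Ideal.span {r}) ^ m • (⊤ : Submodule R R))] ↔ r ^ m ∣ x - y := by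
  rw [SModEq.sub_mem, smul_eq_mul, Ideal.mul_top, Ideal.span_singleton_pow,
      Ideal.mem_span_singleton]

theorem adic (S : CS p k) : IsAdicComplete (Ideal.span {(p : GammaRing p k)}) (GammaRing p k) := by
  have h1 : IsHausdorff (Ideal.span {(p : GammaRing p k)}) (GammaRing p k) := ⟨by
    intro x hx
    refine S.cK_inj fun i => ?_
    rw [eq_zero_of_pow fun j => (S.cK_dvd x j).1 (by simpa using (smod_iff _ _ _ _).1 (hx j)) i]
    simp [cK]⟩
  have h2 : IsPrecomplete (Ideal.span {(p : GammaRing p k)}) (GammaRing p k) := ⟨by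
    intro f hf
    have hpre : IsPrecomplete (Ideal.span {(p : WittVector p k)}) (WittVector p k) := inferInstance
    have hL : ∀ i, ∃ L : WittVector p k, ∀ n, (p : WittVector p k) ^ n ∣ S.co i (f n) - L := by
      intro i
      obtain ⟨L, hL⟩ := hpre.prec (f := fun m => S.co i (f m)) (by
        intro m n hmn
        rw [smod_iff]
        exact S.cont _ _ _ ((smod_iff _ _ _ _).1 (hf hmn)) i)
      exact ⟨L, fun n => (smod_iff _ _ _ _).1 (hL n)⟩
    choose a ha using hL
    obtain ⟨y, hy⟩ := S.surj a (by
      intro j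
      obtain ⟨N, hN⟩ := S.decay (f j) j
      refine ⟨N, fun i hi => ?_⟩
      have := dvd_sub (hN i hi) (ha i j)
      simpa using this)
    refine ⟨y, fun n => ?_⟩
    rw [smod_iff, S.dvd_iff]
    intro i
    rw [map_sub, hy]
    exact ha i n⟩
  exact {}

theorem exists_root (S : CS p k) (y : GammaRing p k) : ∃ z : GammaRing p k,
    z ^ (p + 1) = 1 + (p : GammaRing p k) * y ^ (p + 1) := by
  have := S.adic
  have := S.isDomain
  have hH : HenselianRing (GammaRing p k) (Ideal.span {(p : GammaRing p k)}) := inferInstance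
  obtain ⟨z, hz, -⟩ := hH.is_henselian
    (Polynomial.X ^ (p + 1) - Polynomial.C (1 + (p : GammaRing p k) * y ^ (p + 1)))
    (Polynomial.monic_X_pow_sub_C _ (by omega)) 1 (by
      simp [Ideal.mem_span_singleton]) (by
      have e : (Polynomial.X ^ (p + 1) - Polynomial.C (1 + (p : GammaRing p k) * y ^ (p + 1))).derivative.eval 1
        = (p : GammaRing p k) + 1 := by
          rw [Polynomial.derivative_sub, Polynomial.derivative_C, sub_zero, Polynomial.derivative_X_pow]
          simp
      rw [e, map_add, map_one, Ideal.Quotient.eq_zero_iff_mem.2 (Ideal.mem_span_singleton_self _), zero_add]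
      exact isUnit_one)
  refine ⟨z, ?_⟩
  rw [Polynomial.IsRoot.def] at hz
  simp only [Polynomial.eval_sub, Polynomial.eval_pow, Polynomial.eval_X, Polynomial.eval_C] at hz
  exact sub_eq_zero.1 hz

theorem pdvd_pow (S : CS p k) {x : GammaRing p k} {n : ℕ} (h : (p : GammaRing p k) ∣ x ^ n) :
    (p : GammaRing p k) ∣ x := by
  induction n with
  | zero =>
    rw [pow_zero] at h
    exact h.trans (one_dvd _)
  | succ n ih =>
    rw [pow_succ] at h
    rcases S.p_prime h with h | h
    exacts [ih h, h]

/-- uniqueness of the `p`-exponent -/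
theorem exp_unique (S : CS p k) {a b : ℕ} {x y : GammaRing p k} (hx : ¬ (p : GammaRing p k) ∣ x)
    (hy : ¬ (p : GammaRing p k) ∣ y)
    (h : (p : GammaRing p k) ^ a * x = (p : GammaRing p k) ^ b * y) : a = b := by
  have key : ∀ {a b : ℕ} {x y : GammaRing p k}, ¬ (p : GammaRing p k) ∣ x →
      (p : GammaRing p k) ^ a * x = (p : GammaRing p k) ^ b * y → b ≤ a := by
    intro a b x y hx h
    by_contra hlt
    obtain ⟨c, rfl⟩ : ∃ c, b = a + (c + 1) := ⟨b - a - 1, by omega⟩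
    rw [pow_add, mul_assoc] at h
    exact hx (S.p_cancel h ▸ (dvd_pow_self _ (by omega)).mul_right _)
  exact le_antisymm (key hy h.symm) (key hx h)

theorem gE_inj (S : CS p k) : Function.Injective (gammaToE p k) := by
  have := S.isDomain
  exact IsFractionRing.injective _ _

theorem p_neE (S : CS p k) : (p : ERing p k) ≠ 0 := by
  have hinj := S.gE_inj
  intro h0
  have : gammaToE p k p = gammaToE p k 0 := by simpa using h0
  have h1 := hinj this
  have h2 := S.laurent p 0
  rw [map_natCast, h1, map_zero] at h2
  have h3 : ((p : LaurentSeries (WittVector p k))).coeff 0 = (p : WittVector p k) := by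
    rw [← map_natCast (HahnSeries.C : WittVector p k →+* LaurentSeries (WittVector p k)),
      HahnSeries.C_apply, HahnSeries.coeff_single_same]
  exact p_neW (h3 ▸ h2.symm)

/-- an element `x` of `E` with `1 + p x^(p+1)` an `(p+1)`-st power is `p`-integral,
if `p^j x` is integral for some `j`. -/
theorem integral_of_root (S : CS p k) {x w : ERing p k} {j : ℕ} {y : GammaRing p k}
    (hx : (p : ERing p k) ^ j * x = gammaToE p k y)
    (hw : w ^ (p + 1) = 1 + (p : ERing p k) * x ^ (p + 1)) : ∃ y', x = gammaToE p k y' := by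
  have := S.isDomain
  have hinj : Function.Injective (gammaToE p k) := IsFractionRing.injective _ _
  have hpE : (p : ERing p k) ≠ 0 := S.p_neE
  by_cases hy0 : y = 0
  · refine ⟨0, ?_⟩
    rw [hy0, map_zero] at hx
    rw [map_zero]
    exact (mul_eq_zero.1 hx).resolve_left (pow_ne_zero _ hpE)
  obtain ⟨i, y', hy', rfl⟩ := S.exists_pow hy0
  by_cases hij : j ≤ i
  · obtain ⟨c, rfl⟩ := Nat.exists_eq_add_of_le hij
    refine ⟨(p : GammaRing p k) ^ c * y', ?_⟩
    refine mul_left_cancel₀ (pow_ne_zero j hpE) ?_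
    rw [hx, pow_add]; simp [mul_assoc]
  exfalso
  obtain ⟨c, rfl⟩ : ∃ c, j = i + (c + 1) := ⟨j - i - 1, by omega⟩
  have hx' : (p : ERing p k) ^ (c + 1) * x = gammaToE p k y' := by
    refine mul_left_cancel₀ (pow_ne_zero i hpE) ?_
    rw [← mul_assoc, ← pow_add, hx]; simp
  obtain ⟨a, b, hb, rfl⟩ := IsFractionRing.div_surjective (A := GammaRing p k) w
  have hb0 : b ≠ 0 := nonZeroDivisors.ne_zero hb
  have hbE : gammaToE p k b ≠ 0 := fun h => hb0 (hinj (by rw [h, map_zero]))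
  have key : (p : GammaRing p k) ^ ((c + 1) * (p + 1)) * a ^ (p + 1) =
      b ^ (p + 1) * ((p : GammaRing p k) ^ ((c + 1) * (p + 1)) + p * y' ^ (p + 1)) := by
    apply hinj
    rw [div_pow, div_eq_iff (pow_ne_zero _ hbE)] at hw
    simp only [map_mul, map_pow, map_add, map_natCast]
    rw [hw, ← hx', mul_pow, ← pow_mul]
    ring
  have hnd : ¬ (p : GammaRing p k) ∣ (p : GammaRing p k) ^ ((c + 1) * (p + 1) - 1) + y' ^ (p + 1) := by
    intro h
    have h1 : (p : GammaRing p k) ∣ (p : GammaRing p k) ^ ((c + 1) * (p + 1) - 1) := by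
      refine dvd_pow_self _ ?_
      have := hp.out.two_le
      have : p + 1 ≤ (c + 1) * (p + 1) := Nat.le_mul_of_pos_left _ (by omega)
      omega
    exact hy' (S.pdvd_pow ((dvd_add_right h1).1 h))
  have e1 : (p : GammaRing p k) ^ ((c + 1) * (p + 1)) + p * y' ^ (p + 1) =
      p ^ 1 * ((p : GammaRing p k) ^ ((c + 1) * (p + 1) - 1) + y' ^ (p + 1)) := by
    have : (c + 1) * (p + 1) = 1 + ((c + 1) * (p + 1) - 1) := by
      have : p + 1 ≤ (c + 1) * (p + 1) := Nat.le_mul_of_pos_left _ (by omega)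
      omega
    conv_lhs => rw [this, pow_add]
    ring
  obtain ⟨m, b', hb', rfl⟩ := S.exists_pow hb0
  have ha0 : a ≠ 0 := by
    rintro rfl
    rw [zero_pow (by omega), mul_zero, e1] at key
    have h1 := mul_eq_zero.1 key.symm
    rcases h1 with h1 | h1
    · exact hb0 (pow_eq_zero_iff (by omega) |>.1 h1)
    · have h2 : (p : GammaRing p k) ^ 1 * ((p : GammaRing p k) ^ ((c + 1) * (p + 1) - 1) + y' ^ (p + 1)) = p ^ 1 * 0 := by
        rw [h1, mul_zero]
      exact hnd (S.p_cancel h2 ▸ dvd_zero _)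
  obtain ⟨n, a', ha', rfl⟩ := S.exists_pow ha0
  rw [e1] at key
  have key2 : (p : GammaRing p k) ^ ((c + 1) * (p + 1) + n * (p + 1)) * a' ^ (p + 1) =
      (p : GammaRing p k) ^ (m * (p + 1) + 1) * (b' ^ (p + 1) *
        ((p : GammaRing p k) ^ ((c + 1) * (p + 1) - 1) + y' ^ (p + 1))) := by
    rw [mul_pow, mul_pow, ← pow_mul, ← pow_mul] at key
    rw [pow_add, pow_add]
    linear_combination key
  have h := S.exp_unique (fun h => ha' (S.pdvd_pow h)) (fun h => by
    rcases S.p_prime h with h | h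
    exacts [hb' (S.pdvd_pow h), hnd h]) key2
  have h2 : p + 1 ∣ m * (p + 1) + 1 := h ▸ ⟨c + 1 + n, by ring⟩
  have h3 := (Nat.dvd_add_right (Dvd.intro_left m rfl)).1 h2
  have := hp.out.two_le
  have := Nat.le_of_dvd one_pos h3
  omega

end CS
end Rob

set_option synthInstance.maxHeartbeats 1000000
namespace Rob
open Filter Topology
namespace CS
variable {p : ℕ} [hp : Fact p.Prime] {k : Type*} [Field k] [CharP k p] [PerfectRing k p]
variable (S : CS p k)

/-- `x` is represented by the coefficient family `a`. -/
def RepC (x : ERing p k) (a : ℤ → KW p k) : Prop :=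
  ∃ (j : ℕ) (y : GammaRing p k), (p : ERing p k) ^ j * x = gammaToE p k y ∧
    ∀ i, (p : KW p k) ^ j * a i = S.cK y i

variable {S}

theorem cK_zero (i : ℤ) : S.cK 0 i = 0 := by simp [cK]

theorem RepC.unique {x : ERing p k} {a b : ℤ → KW p k} (ha : S.RepC x a) (hb : S.RepC x b) :
    a = b := by
  obtain ⟨j, y, h1, h2⟩ := ha
  obtain ⟨i, z, h3, h4⟩ := hb
  have e : (p : GammaRing p k) ^ i * y = (p : GammaRing p k) ^ j * z := by
    apply S.gE_inj
    simp only [map_mul, map_pow, map_natCast]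
    rw [← h1, ← h3]; ring
  ext n
  refine mul_left_cancel₀ (pow_ne_zero (i + j) (p_neK (p := p) (k := k))) ?_
  have h5 := congrArg (fun t => S.cK t n) e
  simp only [cK_pmul] at h5
  rw [← h2, ← h4] at h5
  rw [pow_add]
  linear_combination h5

theorem RepC.inj {x y : ERing p k} {a : ℤ → KW p k} (ha : S.RepC x a) (hb : S.RepC y a) :
    x = y := by
  obtain ⟨j, y, h1, h2⟩ := ha
  obtain ⟨i, z, h3, h4⟩ := hb
  have e : (p : GammaRing p k) ^ i * y = (p : GammaRing p k) ^ j * z := by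
    refine S.cK_inj fun n => ?_
    rw [cK_pmul, cK_pmul, ← h2, ← h4]; ring
  have := S.isDomain
  refine mul_left_cancel₀ (pow_ne_zero (i + j) S.p_neE) ?_
  have h5 := congrArg (gammaToE p k) e
  simp only [map_mul, map_pow, map_natCast] at h5
  rw [← h1, ← h3] at h5
  rw [pow_add]
  linear_combination h5

theorem RepC.add {x y : ERing p k} {a b : ℤ → KW p k} (ha : S.RepC x a) (hb : S.RepC y b) :
    S.RepC (x + y) (a + b) := by
  obtain ⟨j, x', h1, h2⟩ := ha
  obtain ⟨i, y', h3, h4⟩ := hb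
  refine ⟨i + j, (p : GammaRing p k) ^ i * x' + (p : GammaRing p k) ^ j * y', ?_, fun n => ?_⟩
  · simp only [map_mul, map_pow, map_natCast, map_add]
    rw [← h1, ← h3]; ring
  · rw [cK_add, cK_pmul, cK_pmul, ← h2, ← h4, Pi.add_apply]; ring

theorem RepC.mul {x y : ERing p k} {a b : ℤ → KW p k} (ha : S.RepC x a) (hb : S.RepC y b) :
    S.RepC (x * y) (conv a b) := by
  obtain ⟨j, x', h1, h2⟩ := ha
  obtain ⟨i, y', h3, h4⟩ := hb
  refine ⟨j + i, x' * y', ?_, fun n => ?_⟩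
  · rw [map_mul, ← h1, ← h3]; ring
  · rw [cK_mul, conv, conv, ← tsum_mul_left]
    refine tsum_congr fun m => ?_
    rw [← h2, ← h4]; ring

theorem RepC.of_gamma (y : GammaRing p k) : S.RepC (gammaToE p k y) (S.cK y) :=
  ⟨0, y, by simp, fun i => by simp⟩

theorem RepC.of_laurent (g : LaurentSeries (WittVector p k)) :
    S.RepC (gammaToE p k (laurentToGamma p k g)) (fun i => wK p k (g.coeff i)) := by
  have := RepC.of_gamma (S := S) (laurentToGamma p k g)
  have e : S.cK (laurentToGamma p k g) = fun i => wK p k (g.coeff i) := by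
    ext i; rw [cK, S.laurent]
  rwa [e] at this

theorem RepC.of_pmul {x : ERing p k} {a : ℤ → KW p k} (j : ℕ)
    (h : S.RepC ((p : ERing p k) ^ j * x) (fun i => (p : KW p k) ^ j * a i)) : S.RepC x a := by
  obtain ⟨i, y, h1, h2⟩ := h
  exact ⟨i + j, y, by rw [pow_add, mul_assoc, h1], fun n => by rw [← h2]; ring⟩

variable (S) in
/-- representation by a Robba element -/
def Rep (x : ERing p k) (f : Robba (KW p k)) : Prop := S.RepC x f.c

theorem Rep.unique {x : ERing p k} {f g : Robba (KW p k)} (hf : S.Rep x f) (hg : S.Rep x g) :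
    f = g := Robba.ext fun i => congrFun (RepC.unique hf hg) i

theorem Rep.inj {x y : ERing p k} {f : Robba (KW p k)} (hf : S.Rep x f) (hg : S.Rep y f) :
    x = y := RepC.inj hf hg

theorem Rep.add {x y : ERing p k} {f g : Robba (KW p k)} (hf : S.Rep x f) (hg : S.Rep y g) :
    S.Rep (x + y) (f + g) := RepC.add hf hg

theorem Rep.mul {x y : ERing p k} {f g : Robba (KW p k)} (hf : S.Rep x f) (hg : S.Rep y g) :
    S.Rep (x * y) (f * g) := RepC.mul hf hg

theorem Rep.bdd {x : ERing p k} {f : Robba (KW p k)} (hf : S.Rep x f) : Bdd f := by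
  obtain ⟨j, y, -, h⟩ := hf
  refine ⟨(‖(p : KW p k)‖ ^ j)⁻¹, fun i => ?_⟩
  have h1 := S.cK_norm y i
  rw [← h, norm_mul, norm_pow] at h1
  have h2 : 0 < ‖(p : KW p k)‖ ^ j := pow_pos norm_p_pos _
  rw [inv_eq_one_div, le_div_iff₀ h2, mul_comm]
  exact h1

theorem Rep.const (a : WittVector p k) : S.Rep (wittToE p k a) (C (wK p k a)) := by
  have := RepC.of_laurent (S := S) (HahnSeries.C a)
  have e : (fun i : ℤ => wK p k ((HahnSeries.C a : LaurentSeries (WittVector p k)).coeff i)) =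
      (C (wK p k a)).c := by
    ext i
    rw [c_C, HahnSeries.C_apply, HahnSeries.coeff_single]
    split_ifs <;> simp
  rw [e] at this
  exact this

theorem Rep.zero : S.Rep 0 0 := by simpa using Rep.const (S := S) 0
theorem Rep.one : S.Rep 1 1 := by simpa using Rep.const (S := S) 1
theorem Rep.pc (j : ℕ) : S.Rep ((p : ERing p k) ^ j) (C ((p : KW p k) ^ j)) := by
  have := Rep.const (S := S) ((p : WittVector p k) ^ j)
  rwa [map_pow, map_pow, map_natCast, map_natCast] at this
theorem Rep.pinv (S : CS p k) (j : ℕ) : ∃ x : ERing p k, (p : ERing p k) ^ j * x = 1 ∧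
    S.Rep x (C (((p : KW p k) ^ j)⁻¹)) := by
  have := S.isDomain
  have hx : (p : ERing p k) ^ j * ((p : ERing p k) ^ j)⁻¹ = 1 :=
    mul_inv_cancel₀ (pow_ne_zero _ S.p_neE)
  refine ⟨_, hx, ?_⟩
  refine RepC.of_pmul j ?_
  have h1 : S.Rep 1 1 := Rep.one
  rw [hx]
  have e : (fun i => (p : KW p k) ^ j * (C (((p : KW p k) ^ j)⁻¹)).c i) = (1 : Robba (KW p k)).c := by
    ext i
    rw [c_C, c_one]
    split_ifs
    · exact mul_inv_cancel₀ (pow_ne_zero _ p_neK)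
    · simp
  rw [e]
  exact h1

theorem Rep.sum {ι : Type*} (s : Finset ι) {x : ι → ERing p k} {f : ι → Robba (KW p k)}
    (h : ∀ i, S.Rep (x i) (f i)) : S.Rep (∑ i ∈ s, x i) (∑ i ∈ s, f i) := by
  classical
  induction s using Finset.induction_on with
  | empty => simpa using Rep.zero
  | insert a s h' ih => rw [Finset.sum_insert h', Finset.sum_insert h']; exact (h a).add ih

theorem isRob_dag {y : GammaRing p k} (hy : y ∈ GammaDagSet p k S.co) : IsRob (S.cK y) := by
  obtain ⟨m, hm, N, hN⟩ := hy
  set ω := ‖(p : KW p k)‖ with hω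
  have hω0 : 0 < ω := norm_p_pos
  have hω1 : ω < 1 := norm_p_lt
  have hm' : (1 : ℝ) ≤ m := by exact_mod_cast hm
  set ρ : ℝ := 1 - (1 - ω) / m with hρ
  have hd : (1 - ω) / m ≤ 1 - ω := div_le_self (by linarith) hm'
  have hd0 : 0 < (1 - ω) / m := by apply div_pos <;> linarith
  have hρ0 : 0 < ρ := by rw [hρ]; linarith
  have hρ1 : ρ < 1 := by rw [hρ]; linarith
  have hρm : ω ≤ ρ ^ m := by
    have h := one_add_mul_le_pow (a := -((1 - ω) / m)) (by linarith) m
    have e : 1 + (m : ℝ) * -((1 - ω) / m) = ω := by field_simp; ring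
    rw [e] at h
    simpa [hρ, sub_eq_add_neg] using h
  refine ⟨ρ, hρ0, hρ1, fun r hr hr1 => ?_⟩
  have hr0 : 0 < r := hρ0.trans hr
  refine Summable.of_nat_of_neg ?_ ?_
  · refine Summable.of_nonneg_of_le (fun n => by positivity) (fun n => ?_)
      (summable_geometric_of_lt_one hr0.le hr1)
    rw [zpow_natCast]
    exact mul_le_b (S.cK_norm _ _) le_rfl (by positivity)
  · have hs : Summable fun n : ℕ => (ρ ^ m)⁻¹ * (ρ / r) ^ n :=
      (summable_geometric_of_lt_one (by positivity) ((div_lt_one hr0).2 hr)).mul_left _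
    refine Summable.of_norm_bounded_eventually_nat hs ?_
    filter_upwards [eventually_ge_atTop (-N).toNat] with t ht
    have h1 := (norm_wK_iff _ _).2 (hN (-(t : ℤ)) (by omega))
    rw [neg_neg, Int.toNat_natCast] at h1
    rw [Real.norm_of_nonneg (by positivity), zpow_neg, zpow_natCast, div_pow]
    have h2 : ω ^ (t / m) * ρ ^ m ≤ ρ ^ t := by
      calc ω ^ (t / m) * ρ ^ m ≤ (ρ ^ m) ^ (t / m) * ρ ^ m := by gcongr
        _ = ρ ^ (m * (t / m) + m) := by rw [← pow_mul, ← pow_add]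
        _ ≤ ρ ^ t := by
          refine pow_le_pow_of_le_one hρ0.le hρ1.le ?_
          have := Nat.div_add_mod t m
          have := Nat.mod_lt t hm
          omega
    have h3 : ‖S.cK y (-(t : ℤ))‖ ≤ (ρ ^ m)⁻¹ * ρ ^ t := by
      rw [inv_mul_eq_div, le_div_iff₀ (by positivity)]
      refine le_trans ?_ h2
      gcongr
      exact h1
    calc _ ≤ ((ρ ^ m)⁻¹ * ρ ^ t) * (r ^ t)⁻¹ := by gcongr
      _ = _ := by ring

theorem exists_rep_of_bdd {f : Robba (KW p k)} (hf : Bdd f) :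
    ∃ x ∈ EDagSet p k S.co, S.Rep x f := by
  obtain ⟨B, hB⟩ := hf
  obtain ⟨j, hj⟩ := exists_norm_le_one (p := p) (k := k) B
  have hW : ∀ n, ∃ a, (p : KW p k) ^ j * f.c n = wK p k a := fun n =>
    exists_of_norm_le (hj _ (hB n))
  choose a ha using hW
  obtain ⟨ρ, hρ0, hρ1, hc⟩ := f.rob
  obtain ⟨r, hr, hr1⟩ := exists_between hρ1
  have hr0 := hρ0.trans hr
  have hsum : Summable fun i => ‖f.c i‖ * r ^ i := hc r hr hr1
  have hbd : ∃ D : ℝ, 0 < D ∧ ∀ t : ℕ, ‖f.c (-(t : ℤ))‖ ≤ D * r ^ t := by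
    refine ⟨(∑' i, ‖f.c i‖ * r ^ i) + 1, ?_, fun t => ?_⟩
    · have : 0 ≤ ∑' i, ‖f.c i‖ * r ^ i := tsum_nonneg fun i => by positivity
      linarith
    · have h1 := hsum.le_tsum (-(t : ℤ)) (fun i _ => by positivity)
      rw [zpow_neg, zpow_natCast, mul_inv_le_iff₀ (by positivity)] at h1
      refine h1.trans ?_
      gcongr
      linarith
  obtain ⟨D, hD0, hD⟩ := hbd
  set ω := ‖(p : KW p k)‖ with hω
  have hω0 : 0 < ω := norm_p_pos
  have hω1 : ω < 1 := norm_p_lt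
  obtain ⟨m', hm'⟩ := exists_pow_lt_of_lt_one (show 0 < ω ^ 2 by positivity) hr1
  set m := m' + 1
  have hm : r ^ m ≤ ω ^ 2 := (pow_le_pow_of_le_one hr0.le hr1.le (by omega)).trans hm'.le
  obtain ⟨s, hs⟩ := exists_pow_lt_of_lt_one (show 0 < D⁻¹ by positivity) hω1
  have hm0 : 0 < m := by omega
  have key : ∀ t : ℕ, m * s ≤ t → (p : WittVector p k) ^ (t / m) ∣ a (-(t : ℤ)) := by
    intro t ht
    rw [← norm_wK_iff, ← ha, norm_mul, norm_pow]
    have h1 : s ≤ t / m := by rw [Nat.le_div_iff_mul_le hm0]; linarith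
    have h2 : ω ^ j ≤ 1 := pow_le_one₀ hω0.le hω1.le
    calc ω ^ j * ‖f.c (-(t : ℤ))‖ ≤ 1 * (D * r ^ t) := by gcongr; exact hD t
      _ ≤ 1 * (D * r ^ (m * (t / m))) := by
        gcongr 1
        gcongr 1
        exact pow_le_pow_of_le_one hr0.le hr1.le (Nat.mul_div_le _ _)
      _ ≤ D * (ω ^ 2) ^ (t / m) := by rw [one_mul, pow_mul]; gcongr
      _ = D * ω ^ (t / m) * ω ^ (t / m) := by rw [← pow_mul]; ring
      _ ≤ D * D⁻¹ * ω ^ (t / m) := by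
        gcongr 1
        gcongr 1
        exact (pow_le_pow_of_le_one hω0.le hω1.le h1).trans hs.le
      _ = _ := by rw [mul_inv_cancel₀ hD0.ne', one_mul]
  have key' : ∀ i : ℤ, i ≤ -((m * s : ℕ) : ℤ) → (p : WittVector p k) ^ ((-i).toNat / m) ∣ a i := by
    intro i hi
    have := key (-i).toNat (by omega)
    have e : -(((-i).toNat : ℕ) : ℤ) = i := by omega
    rwa [e] at this
  obtain ⟨y, hy⟩ := S.surj a (by
    intro j'
    refine ⟨-((m * s : ℕ) : ℤ) - ((m * j' : ℕ) : ℤ), fun i hi => ?_⟩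
    refine (pow_dvd_pow _ ?_).trans (key' i (by omega))
    rw [Nat.le_div_iff_mul_le hm0]
    have : m * j' ≤ (-i).toNat := by omega
    linarith)
  have := S.isDomain
  obtain ⟨pi, hpi, -⟩ := Rep.pinv S j
  have e : (p : ERing p k) ^ j * (pi * gammaToE p k y) = gammaToE p k y := by
    rw [← mul_assoc, hpi, one_mul]
  refine ⟨pi * gammaToE p k y, ⟨y, j, ⟨m, hm0, -((m * s : ℕ) : ℤ), fun i hi => ?_⟩, e⟩, j, y, e, fun i => ?_⟩
  · rw [hy]; exact key' i hi
  · rw [ha, cK, hy]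

theorem exists_rep_of_dag {x : ERing p k} (hx : x ∈ EDagSet p k S.co) : ∃ f, S.Rep x f := by
  obtain ⟨y, j, hy, e⟩ := hx
  refine ⟨C (((p : KW p k) ^ j)⁻¹) * mkR _ (isRob_dag hy), j, y, e, fun i => ?_⟩
  rw [c_C_mul, c_mk, mul_inv_cancel_left₀ (pow_ne_zero _ p_neK)]

theorem mem_dag {x : ERing p k} {f : Robba (KW p k)} (h : S.Rep x f) : x ∈ EDagSet p k S.co := by
  obtain ⟨y, hy, h'⟩ := exists_rep_of_bdd h.bdd
  rwa [h.inj h']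

theorem dag_iff {x : ERing p k} : x ∈ EDagSet p k S.co ↔ ∃ f, S.Rep x f :=
  ⟨exists_rep_of_dag, fun ⟨_, h⟩ => mem_dag h⟩

theorem co_ps (g : PowerSeries (WittVector p k)) (i : ℤ) :
    S.co i (laurentToGamma p k (HahnSeries.ofPowerSeries ℤ _ g)) =
      if i < 0 then 0 else PowerSeries.coeff i.natAbs g := by
  rw [S.laurent, PowerSeries.coeff_coe]

theorem plus_dag {x : ERing p k} (hx : x ∈ EPlusSet p k) : x ∈ EDagSet p k S.co := by
  obtain ⟨g, j, e⟩ := hx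
  refine ⟨_, j, ⟨1, one_pos, -1, fun i hi => ?_⟩, e⟩
  rw [co_ps, if_pos (by omega)]
  exact dvd_zero _

theorem plus_iff {x : ERing p k} {f : Robba (KW p k)} (h : S.Rep x f) :
    x ∈ EPlusSet p k ↔ Supp 0 f := by
  constructor
  · rintro ⟨g, j, e⟩
    have h1 : S.RepC x (fun i => ((p : KW p k) ^ j)⁻¹ *
        S.cK (laurentToGamma p k (HahnSeries.ofPowerSeries ℤ _ g)) i) := by
      refine ⟨j, _, e, fun i => ?_⟩
      rw [mul_inv_cancel_left₀ (pow_ne_zero _ p_neK)]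
    intro i hi
    rw [RepC.unique h h1]
    simp only [cK]
    rw [co_ps, if_pos hi]
    simp
  · intro hs
    obtain ⟨j, y, e, h⟩ := h
    refine ⟨PowerSeries.mk fun n => S.co n y, j, ?_⟩
    rw [e]
    show _ = gammaToE p k (laurentToGamma p k (HahnSeries.ofPowerSeries ℤ _ _))
    congr 1
    refine S.ext' fun i => ?_
    rw [co_ps]
    split_ifs with hi
    · apply wK_inj p k
      have := h i
      rw [hs i hi, mul_zero] at this
      rw [map_zero]; exact this.symm
    · rw [PowerSeries.coeff_mk]
      congr 2
      omega

end CS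
end Rob

set_option synthInstance.maxHeartbeats 1000000
namespace Rob
open Filter Topology
namespace CS
variable {p : ℕ} [hp : Fact p.Prime] {k : Type*} [Field k] [CharP k p] [PerfectRing k p]
variable {S : CS p k} {f q : ℕ} {hq : 2 ≤ q} {σ : ERing p k →+* ERing p k}

theorem Rep.neg {x : ERing p k} {g : Robba (KW p k)} (h : S.Rep x g) : S.Rep (-x) (-g) := by
  have h1 := (Rep.const (S := S) (-1)).mul h
  simpa using h1

theorem Rep.sub {x y : ERing p k} {g h : Robba (KW p k)} (hx : S.Rep x g) (hy : S.Rep y h) :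
    S.Rep (x - y) (g - h) := by
  rw [sub_eq_add_neg, sub_eq_add_neg]; exact hx.add hy.neg

theorem Rep.pow {x : ERing p k} {g : Robba (KW p k)} (h : S.Rep x g) (n : ℕ) :
    S.Rep (x ^ n) (g ^ n) := by
  induction n with
  | zero => simpa using Rep.one
  | succ n ih => rw [pow_succ, pow_succ]; exact ih.mul h

def mono (m : ℤ) : Robba (KW p k) := mkR (Pi.single m 1) (isRob_single m 1)

theorem mono_supp (m : ℤ) : Supp m (mono (p := p) (k := k) m) := by
  intro i hi
  simp [mono, Pi.single_apply, hi.ne]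

theorem rep_mono (m : ℤ) : S.Rep (gammaToE p k (laurentToGamma p k (HahnSeries.single m 1)))
    (mono m) := by
  have := RepC.of_laurent (S := S) (HahnSeries.single m 1)
  have e : (fun i : ℤ => wK p k ((HahnSeries.single m 1 : LaurentSeries (WittVector p k)).coeff i)) =
      (mono m : Robba (KW p k)).c := by
    ext i
    rw [HahnSeries.coeff_single, mono, c_mk, Pi.single_apply]
    split_ifs <;> simp
  rw [e] at this
  exact this

variable (S f hq σ) in
def Good (x : ERing p k) : Prop :=
  ∃ g, S.Rep x g ∧ S.Rep (σ x) (sig (tauW p k f) q (norm_tauW f) hq g)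

theorem Good.add {x y : ERing p k} (hx : S.Good f hq σ x) (hy : S.Good f hq σ y) :
    S.Good f hq σ (x + y) := by
  obtain ⟨a, h1, h2⟩ := hx
  obtain ⟨b, h3, h4⟩ := hy
  exact ⟨a + b, h1.add h3, by rw [map_add, map_add]; exact h2.add h4⟩

theorem Good.mul {x y : ERing p k} (hx : S.Good f hq σ x) (hy : S.Good f hq σ y) :
    S.Good f hq σ (x * y) := by
  obtain ⟨a, h1, h2⟩ := hx
  obtain ⟨b, h3, h4⟩ := hy
  exact ⟨a * b, h1.mul h3, by rw [map_mul, map_mul]; exact h2.mul h4⟩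

theorem Good.one : S.Good f hq σ 1 := ⟨1, Rep.one, by rw [map_one, map_one]; exact Rep.one⟩

theorem Good.zero : S.Good f hq σ 0 := ⟨0, Rep.zero, by rw [map_zero, map_zero]; exact Rep.zero⟩

theorem Good.pow {x : ERing p k} (hx : S.Good f hq σ x) (n : ℕ) : S.Good f hq σ (x ^ n) := by
  induction n with
  | zero => rw [pow_zero]; exact Good.one
  | succ n ih => rw [pow_succ]; exact ih.mul hx

theorem Good.sum {ι : Type*} (s : Finset ι) {x : ι → ERing p k}
    (h : ∀ i, S.Good f hq σ (x i)) : S.Good f hq σ (∑ i ∈ s, x i) := by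
  classical
  induction s using Finset.induction_on with
  | empty => rw [Finset.sum_empty]; exact Good.zero
  | insert a s h' ih => rw [Finset.sum_insert h']; exact (h a).add ih

theorem Good.of_inv {x y : ERing p k} {a : Robba (KW p k)} (hx : S.Good f hq σ x) (h : x * y = 1)
    (hy : S.Rep y a) {b : Robba (KW p k)} (hb : S.Rep (σ y) b) : S.Good f hq σ y := by
  obtain ⟨g, h1, h2⟩ := hx
  refine ⟨a, hy, ?_⟩
  set s := sig (tauW p k f) q (norm_tauW f) hq
  have e1 : g * a = 1 := Rep.unique (h1.mul hy) (by rw [h]; exact Rep.one)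
  have e2 : s g * b = 1 := Rep.unique (h2.mul hb) (by rw [← map_mul, h, map_one]; exact Rep.one)
  have e3 : s g * s a = 1 := by rw [← map_mul, e1, map_one]
  have e4 : s a = b := by
    calc s a = s a * (s g * b) := by rw [e2, mul_one]
      _ = (s g * s a) * b := by ring
      _ = b := by rw [e3, one_mul]
  rw [e4]; exact hb

theorem Good.const (hσO : ∀ a : WittVector p k,
      σ (wittToE p k a) = wittToE p k (((WittVector.frobenius : WittVector p k →+* WittVector p k) ^ f) a))
    (a : WittVector p k) : S.Good f hq σ (wittToE p k a) := by
  refine ⟨_, Rep.const a, ?_⟩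
  rw [hσO, sig_C, tauW_wK]
  exact Rep.const _

theorem uE_rep : S.Rep (uE p k) (mono 1) := rep_mono 1

theorem mono_mul (a b : ℤ) : (mono a * mono b : Robba (KW p k)) = mono (a + b) := by
  refine Robba.ext fun i => ?_
  rw [c_mul]
  simp only [mono, c_mk]
  rw [single_conv]
  simp only [Pi.single_apply, one_mul]
  congr 1
  simp only [eq_iff_iff]
  omega

theorem mono_pow (n : ℕ) : (mono 1 ^ n : Robba (KW p k)) = mono n := by
  induction n with
  | zero =>
    refine Robba.ext fun i => ?_
    rw [pow_zero, c_one]; simp [mono, Pi.single_apply]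
  | succ n ih => rw [pow_succ, ih, mono_mul]; simp

theorem sig_mono (m : ℤ) : sig (tauW p k f) q (norm_tauW f) hq (mono m) = mono (q * m) := by
  refine Robba.ext fun i => ?_
  rw [sig_c, sigc]
  simp only [mono, c_mk, Pi.single_apply]
  have hq0 : (q : ℤ) ≠ 0 := by omega
  by_cases hi : (q : ℤ) ∣ i
  · obtain ⟨j, rfl⟩ := hi
    rw [if_pos (dvd_mul_right _ _), Int.mul_ediv_cancel_left _ hq0]
    by_cases hj : j = m
    · simp [hj]
    · rw [if_neg hj, if_neg (fun h => hj (mul_left_cancel₀ hq0 h)), map_zero]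
  · rw [if_neg hi, if_neg]
    rintro rfl
    exact hi (dvd_mul_right _ _)

theorem Good.u (hσu : σ (uE p k) = uE p k ^ q) : S.Good f hq σ (uE p k) := by
  refine ⟨_, uE_rep, ?_⟩
  rw [sig_mono, hσu, mul_one, ← mono_pow]
  exact uE_rep.pow q

def uI (p : ℕ) [hp : Fact p.Prime] (k : Type*) [Field k] [CharP k p] : ERing p k :=
  gammaToE p k (laurentToGamma p k (HahnSeries.single (-1) 1))

theorem u_uI : uE p k * uI p k = 1 := by
  rw [uE, uI, ← map_mul, ← map_mul, HahnSeries.single_mul_single]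
  simp

theorem Good.uI (hσu : σ (uE p k) = uE p k ^ q) : S.Good f hq σ (uI p k) := by
  have h1 : S.Rep (CS.uI p k) (mono (-1)) := rep_mono (-1)
  refine Good.of_inv (Good.u hσu) u_uI h1 (b := mono (-1) ^ q) ?_
  have e : σ (CS.uI p k) = CS.uI p k ^ q := by
    have e1 : uE p k ^ q * σ (CS.uI p k) = 1 := by rw [← hσu, ← map_mul, u_uI, map_one]
    have e2 : uE p k ^ q * CS.uI p k ^ q = 1 := by rw [← mul_pow, u_uI, one_pow]
    calc σ (CS.uI p k) = (uE p k ^ q * CS.uI p k ^ q) * σ (CS.uI p k) := by rw [e2, one_mul]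
      _ = (uE p k ^ q * σ (CS.uI p k)) * CS.uI p k ^ q := by ring
      _ = _ := by rw [e1, one_mul]
  rw [e]
  exact h1.pow q

theorem psToE_X : psToE p k PowerSeries.X = uE p k := by
  simp only [uE, RingHom.comp_apply, HahnSeries.ofPowerSeries_X]

theorem psToE_C (a : WittVector p k) : psToE p k (PowerSeries.C a) = wittToE p k a := by
  simp only [RingHom.comp_apply, HahnSeries.ofPowerSeries_C]

theorem ps_split (h : PowerSeries (WittVector p k)) (M : ℕ) : ∃ h' : PowerSeries (WittVector p k),
    h = (∑ i ∈ Finset.range M, PowerSeries.C (PowerSeries.coeff i h) * PowerSeries.X ^ i) +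
      PowerSeries.X ^ M * h' := by
  have h1 : PowerSeries.X ^ M ∣ h - ∑ i ∈ Finset.range M, PowerSeries.C (PowerSeries.coeff i h) * PowerSeries.X ^ i := by
    rw [PowerSeries.X_pow_dvd_iff]
    intro m hm
    rw [map_sub, map_sum]
    simp only [PowerSeries.coeff_C_mul, PowerSeries.coeff_X_pow]
    simp [hm]
  obtain ⟨h', e⟩ := h1
  exact ⟨h', by rw [← e]; ring⟩

theorem psToE_mem (h : PowerSeries (WittVector p k)) : psToE p k h ∈ EPlusSet p k :=
  ⟨h, 0, by simp⟩

theorem exists_rep_plus {x : ERing p k} (hx : x ∈ EPlusSet p k) : ∃ a, S.Rep x a ∧ Supp 0 a := by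
  obtain ⟨a, ha⟩ := exists_rep_of_dag (S := S) (plus_dag hx)
  exact ⟨a, ha, (plus_iff ha).1 hx⟩

theorem Good.ps (hσu : σ (uE p k) = uE p k ^ q) (hσO : ∀ a : WittVector p k,
      σ (wittToE p k a) = wittToE p k (((WittVector.frobenius : WittVector p k →+* WittVector p k) ^ f) a))
    (hσEp : Set.MapsTo σ (EPlusSet p k) (EPlusSet p k)) (h : PowerSeries (WittVector p k)) :
    S.Good f hq σ (psToE p k h) := by
  obtain ⟨a, ha, -⟩ := exists_rep_plus (S := S) (psToE_mem h)
  obtain ⟨b, hb, -⟩ := exists_rep_plus (S := S) (hσEp (psToE_mem h))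
  refine ⟨a, ha, ?_⟩
  set s := sig (tauW p k f) q (norm_tauW f) hq with hs
  suffices e : b - s a = 0 by rw [← sub_eq_zero.1 e]; exact hb
  have key : ∀ M : ℕ, Supp ((q * M : ℕ) : ℤ) (b - s a) := by
    intro M
    obtain ⟨h', e⟩ := ps_split h M
    obtain ⟨a', ha', sa'⟩ := exists_rep_plus (S := S) (psToE_mem h')
    obtain ⟨b', hb', sb'⟩ := exists_rep_plus (S := S) (hσEp (psToE_mem h'))
    have hg : S.Good f hq σ (∑ i ∈ Finset.range M, wittToE p k (PowerSeries.coeff i h) * uE p k ^ i) :=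
      Good.sum _ fun i => (Good.const hσO _).mul ((Good.u hσu).pow i)
    obtain ⟨g, hg1, hg2⟩ := hg
    have e1 : psToE p k h = (∑ i ∈ Finset.range M, wittToE p k (PowerSeries.coeff i h) * uE p k ^ i)
        + uE p k ^ M * psToE p k h' := by
      conv_lhs => rw [e]
      rw [map_add, map_sum, map_mul, map_pow, psToE_X]
      congr 1
      refine Finset.sum_congr rfl fun i _ => ?_
      rw [map_mul, map_pow, psToE_X, psToE_C]
    have ea : a = g + mono M * a' := by
      rw [e1] at ha
      refine ha.unique (hg1.add (Rep.mul ?_ ha'))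
      rw [← mono_pow]; exact uE_rep.pow M
    have eb : b = s g + mono ((q * M : ℕ) : ℤ) * b' := by
      rw [e1, map_add, map_mul, map_pow, hσu, ← pow_mul] at hb
      refine hb.unique (hg2.add (Rep.mul ?_ hb'))
      rw [← mono_pow]; exact uE_rep.pow _
    have e2 : b - s a = mono ((q * M : ℕ) : ℤ) * (b' - s a') := by
      rw [ea, eb, map_add, map_mul, hs, sig_mono]
      push_cast
      ring
    rw [e2]
    have h0 : Supp 0 (b' - s a') := (suppSub (KW p k)).sub_mem sb' (Supp.sig _ _ _ _ sa')
    have := (mono_supp (p := p) (k := k) ((q * M : ℕ) : ℤ)).mul h0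
    rwa [add_zero] at this
  refine Robba.ext fun i => ?_
  rw [c_zero]
  refine key (i.natAbs + 1) i ?_
  have : i.natAbs + 1 ≤ q * (i.natAbs + 1) := Nat.le_mul_of_pos_left _ (by omega)
  omega

theorem laurent_form (g : LaurentSeries (WittVector p k)) : ∃ (M : ℕ) (h : PowerSeries (WittVector p k)),
    gammaToE p k (laurentToGamma p k g) = uI p k ^ M * psToE p k h := by
  obtain ⟨N, hN⟩ := laurent_low g
  have hh : uE p k ^ N.natAbs * gammaToE p k (laurentToGamma p k g) =
      psToE p k (PowerSeries.mk fun n => g.coeff ((n : ℤ) - N.natAbs)) := by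
    rw [uE, ← map_pow, ← map_pow, ← map_mul, ← map_mul]
    show _ = gammaToE p k (laurentToGamma p k (HahnSeries.ofPowerSeries ℤ _ _))
    congr 2
    ext i : 2
    rw [HahnSeries.single_pow, PowerSeries.coeff_coe]
    have := HahnSeries.coeff_single_mul_add (r := (1 : WittVector p k) ^ N.natAbs) (x := g)
      (a := i - N.natAbs • (1 : ℤ)) (b := N.natAbs • (1 : ℤ))
    rw [sub_add_cancel] at this
    rw [this, one_pow, one_mul]
    simp only [smul_eq_mul, nsmul_eq_mul, mul_one]
    split_ifs with hi
    · exact hN (i - (N.natAbs : ℤ)) (by omega)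
    · rw [PowerSeries.coeff_mk]
      have e : ((i.natAbs : ℕ) : ℤ) = i := by omega
      rw [e]
  refine ⟨N.natAbs, PowerSeries.mk fun n => g.coeff ((n : ℤ) - N.natAbs), ?_⟩
  rw [← hh, ← mul_assoc, ← mul_pow, mul_comm (uI p k), u_uI, one_pow, one_mul]

theorem Good.laurent (hσu : σ (uE p k) = uE p k ^ q) (hσO : ∀ a : WittVector p k,
      σ (wittToE p k a) = wittToE p k (((WittVector.frobenius : WittVector p k →+* WittVector p k) ^ f) a))
    (hσEp : Set.MapsTo σ (EPlusSet p k) (EPlusSet p k)) (g : LaurentSeries (WittVector p k)) :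
    S.Good f hq σ (gammaToE p k (laurentToGamma p k g)) := by
  obtain ⟨M, h, e⟩ := laurent_form g
  rw [e]
  exact ((Good.uI hσu).pow M).mul (Good.ps hσu hσO hσEp h)

theorem sigma_integral (hσEd : Set.MapsTo σ (EDagSet p k S.co) (EDagSet p k S.co))
    {y : GammaRing p k} (hy : gammaToE p k y ∈ EDagSet p k S.co) :
    ∃ y', σ (gammaToE p k y) = gammaToE p k y' := by
  obtain ⟨z, j, -, hz⟩ := hσEd hy
  obtain ⟨w, hw⟩ := S.exists_root y
  refine S.integral_of_root hz (w := σ (gammaToE p k w)) ?_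
  rw [← map_pow, ← map_pow, hw]
  simp

theorem Good.gamma (hσu : σ (uE p k) = uE p k ^ q) (hσO : ∀ a : WittVector p k,
      σ (wittToE p k a) = wittToE p k (((WittVector.frobenius : WittVector p k →+* WittVector p k) ^ f) a))
    (hσEp : Set.MapsTo σ (EPlusSet p k) (EPlusSet p k))
    (hσEd : Set.MapsTo σ (EDagSet p k S.co) (EDagSet p k S.co))
    {y : GammaRing p k} (hy : gammaToE p k y ∈ EDagSet p k S.co) :
    S.Good f hq σ (gammaToE p k y) := by
  obtain ⟨a, ha⟩ := exists_rep_of_dag hy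
  obtain ⟨b, hb⟩ := exists_rep_of_dag (hσEd hy)
  refine ⟨a, ha, ?_⟩
  set s := sig (tauW p k f) q (norm_tauW f) hq with hs
  suffices e : b - s a = 0 by rw [← sub_eq_zero.1 e]; exact hb
  refine Robba.ext fun i => ?_
  rw [c_zero]
  refine eq_zero_of_pow fun j => ?_
  obtain ⟨g, z, hz⟩ := S.dense y j
  obtain ⟨g', hg1, hg2⟩ := Good.laurent (S := S) (hq := hq) hσu hσO hσEp g
  have ez : (p : ERing p k) ^ j * gammaToE p k z =
      gammaToE p k y - gammaToE p k (laurentToGamma p k g) := by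
    rw [← map_sub, hz]; simp
  obtain ⟨pi, hpi, hpir⟩ := Rep.pinv S j
  have hzr := hpir.mul (ha.sub hg1)
  have ez' : pi * (gammaToE p k y - gammaToE p k (laurentToGamma p k g)) = gammaToE p k z := by
    rw [← ez, ← mul_assoc, mul_comm pi, hpi, one_mul]
  rw [ez'] at hzr
  obtain ⟨z', hz'⟩ := sigma_integral hσEd (mem_dag hzr)
  set a' := C (((p : KW p k) ^ j)⁻¹) * (a - g')
  have ha' : ∀ n, ‖a'.c n‖ ≤ 1 := fun n => by
    rw [RepC.unique hzr (RepC.of_gamma z)]; exact S.cK_norm _ _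
  obtain ⟨b', hb'⟩ := exists_rep_of_dag (hσEd (mem_dag hzr))
  have hb1 : ∀ n, ‖b'.c n‖ ≤ 1 := fun n => by
    rw [hz'] at hb'
    rw [RepC.unique hb' (RepC.of_gamma z')]; exact S.cK_norm _ _
  have e1 : a = g' + C ((p : KW p k) ^ j) * a' := by
    rw [← mul_assoc, ← map_mul, mul_inv_cancel₀ (pow_ne_zero _ p_neK), map_one, one_mul]
    ring
  have e2 : b = s g' + C ((p : KW p k) ^ j) * b' := by
    have h1 : gammaToE p k y = gammaToE p k (laurentToGamma p k g) + (p : ERing p k) ^ j * gammaToE p k z := by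
      rw [ez]; ring
    rw [h1, map_add, map_mul, map_pow, map_natCast] at hb
    exact hb.unique (hg2.add ((Rep.pc j).mul hb'))
  have e3 : b - s a = C ((p : KW p k) ^ j) * (b' - s a') := by
    have hC : s (C ((p : KW p k) ^ j)) = C ((p : KW p k) ^ j) := by
      rw [hs, sig_C]
      congr 1
      rw [map_pow, map_natCast]
    rw [e2, e1, map_add, map_mul, hC]
    ring
  rw [e3, c_C_mul, norm_mul, norm_pow]
  have h3 : ‖(s a').c i‖ ≤ 1 := by
    rw [hs, sig_c, sigc]
    split_ifs
    · rw [norm_tauW]; exact ha' _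
    · simp
  refine mul_le_a le_rfl ?_ (norm_nonneg _) (by positivity)
  rw [c_sub, sub_eq_add_neg]
  refine (IsUltrametricDist.norm_add_le_max _ _).trans (max_le (hb1 _) ?_)
  rw [norm_neg]; exact h3

theorem good_dag (hσu : σ (uE p k) = uE p k ^ q) (hσO : ∀ a : WittVector p k,
      σ (wittToE p k a) = wittToE p k (((WittVector.frobenius : WittVector p k →+* WittVector p k) ^ f) a))
    (hσEp : Set.MapsTo σ (EPlusSet p k) (EPlusSet p k))
    (hσEd : Set.MapsTo σ (EDagSet p k S.co) (EDagSet p k S.co))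
    {x : ERing p k} {a : Robba (KW p k)} (hx : S.Rep x a) :
    S.Rep (σ x) (sig (tauW p k f) q (norm_tauW f) hq a) := by
  obtain ⟨j, y, e, -⟩ := id hx
  have hy : gammaToE p k y ∈ EDagSet p k S.co := by
    rw [← e]; exact mem_dag ((Rep.pc j).mul hx)
  obtain ⟨b, hb1, hb2⟩ := Good.gamma (S := S) (hq := hq) hσu hσO hσEp hσEd hy
  have e1 : b = C ((p : KW p k) ^ j) * a := hb1.unique (by rw [← e]; exact (Rep.pc j).mul hx)
  rw [← e, e1, map_mul, map_mul, sig_C, map_pow, map_natCast, map_pow, map_natCast] at hb2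
  refine RepC.of_pmul j ?_
  have e2 : (C ((p : KW p k) ^ j) * sig (tauW p k f) q (norm_tauW f) hq a).c =
      fun i => (p : KW p k) ^ j * (sig (tauW p k f) q (norm_tauW f) hq a).c i := by
    ext i; rw [c_C_mul]
  rw [← e2]
  exact hb2

end CS
end Rob

set_option synthInstance.maxHeartbeats 1000000
namespace Rob
open Filter Topology

theorem snf_lemma {R : Type*} [CommRing R] [IsDomain R] [IsPrincipalIdealRing R] {n l : ℕ}
    (P : Matrix (Fin n) (Fin l) R) (J : Fin l → Fin n) (y : R) (hy : y ≠ 0)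
    (hJ : P.submatrix J id = y • (1 : Matrix (Fin l) (Fin l) R)) :
    ∃ (W : Matrix (Fin n) (Fin l) R) (L : Matrix (Fin l) (Fin n) R) (T : Matrix (Fin l) (Fin l) R),
      L * W = 1 ∧ P = W * T := by
  classical
  have hinj : Function.Injective P.mulVecLin := by
    rw [← LinearMap.ker_eq_bot, LinearMap.ker_eq_bot']
    intro v hv
    have h1 : (P.submatrix J id).mulVec v = 0 := by
      ext a
      have := congrFun hv (J a)
      simpa [Matrix.mulVec, dotProduct] using this
    rw [hJ, Matrix.smul_mulVec, Matrix.one_mulVec] at h1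
    exact (smul_eq_zero.1 h1).resolve_left hy
  obtain ⟨m, snf⟩ := Submodule.smithNormalForm (Pi.basisFun R (Fin n)) (LinearMap.range P.mulVecLin)
  have hm : m = l := by
    have e := (LinearEquiv.ofInjective P.mulVecLin hinj).finrank_eq
    rw [Module.finrank_eq_card_basis snf.bN] at e
    simpa using e.symm
  subst hm
  have hcol : ∀ j, P.col j ∈ LinearMap.range P.mulVecLin := fun j =>
    ⟨Pi.single j 1, by simp⟩
  refine ⟨Matrix.of fun i a => snf.bM (snf.f a) i,
    Matrix.of fun a i => snf.bM.repr (Pi.single i 1) (snf.f a),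
    Matrix.of fun a j => snf.bN.repr ⟨_, hcol j⟩ a * snf.a a, ?_, ?_⟩
  · ext a b
    rw [Matrix.mul_apply]
    have h1 : snf.bM (snf.f b) = ∑ i, snf.bM (snf.f b) i • (Pi.single i (1 : R) : Fin n → R) := by
      ext i
      simp [Finset.sum_apply, Pi.single_apply]
    have h2 := congrArg (fun v => snf.bM.repr v (snf.f a)) h1
    simp only [Module.Basis.repr_self, map_sum, map_smul, Finsupp.coe_finsetSum, Finset.sum_apply,
      Finsupp.smul_apply, smul_eq_mul] at h2
    simp only [Matrix.of_apply]
    rw [Matrix.one_apply]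
    rw [Finsupp.single_apply] at h2
    simp only [snf.f.injective.eq_iff] at h2
    rw [show (if a = b then (1 : R) else 0) = if b = a then 1 else 0 by simp [eq_comm], h2]
    exact Finset.sum_congr rfl fun i _ => mul_comm _ _
  · ext i j
    have h1 := snf.bN.sum_repr ⟨_, hcol j⟩
    have h2 := congrArg (fun v : LinearMap.range P.mulVecLin => (v : Fin n → R) i) h1
    simp only [Submodule.coe_sum, Submodule.coe_smul, Finset.sum_apply, Pi.smul_apply, snf.snf,
      smul_eq_mul] at h2
    rw [Matrix.mul_apply]
    refine Eq.trans (h2.symm : P i j = _) (Finset.sum_congr rfl fun a _ => ?_)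
    simp only [Matrix.of_apply]
    ring

namespace CS
variable {p : ℕ} [hp : Fact p.Prime] {k : Type*} [Field k] [CharP k p] [PerfectRing k p]

/-- `E_+` as a subring -/
def EP (S : CS p k) : Subring (ERing p k) where
  carrier := EPlusSet p k
  mul_mem' := by
    intro x y hx hy
    obtain ⟨a, ha, sa⟩ := exists_rep_plus (S := S) hx
    obtain ⟨b, hb, sb⟩ := exists_rep_plus (S := S) hy
    exact (plus_iff (ha.mul hb)).2 ((suppSub (KW p k)).mul_mem sa sb)
  add_mem' := by
    intro x y hx hy
    obtain ⟨a, ha, sa⟩ := exists_rep_plus (S := S) hx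
    obtain ⟨b, hb, sb⟩ := exists_rep_plus (S := S) hy
    exact (plus_iff (ha.add hb)).2 ((suppSub (KW p k)).add_mem sa sb)
  one_mem' := (plus_iff (Rep.one (S := S))).2 (suppSub (KW p k)).one_mem
  zero_mem' := (plus_iff (Rep.zero (S := S))).2 (suppSub (KW p k)).zero_mem
  neg_mem' := by
    intro x hx
    obtain ⟨a, ha, sa⟩ := exists_rep_plus (S := S) hx
    exact (plus_iff ha.neg).2 ((suppSub (KW p k)).neg_mem sa)

theorem mem_EP (S : CS p k) {x : ERing p k} : x ∈ S.EP ↔ x ∈ EPlusSet p k := Iff.rfl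

/-- `E^†` as a subring -/
def ED (S : CS p k) : Subring (ERing p k) where
  carrier := EDagSet p k S.co
  mul_mem' := by
    intro x y hx hy
    obtain ⟨a, ha⟩ := dag_iff.1 hx
    obtain ⟨b, hb⟩ := dag_iff.1 hy
    exact mem_dag (ha.mul hb)
  add_mem' := by
    intro x y hx hy
    obtain ⟨a, ha⟩ := dag_iff.1 hx
    obtain ⟨b, hb⟩ := dag_iff.1 hy
    exact mem_dag (ha.add hb)
  one_mem' := mem_dag (Rep.one (S := S))
  zero_mem' := mem_dag (Rep.zero (S := S))
  neg_mem' := by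
    intro x hx
    obtain ⟨a, ha⟩ := dag_iff.1 hx
    exact mem_dag ha.neg

theorem pinv_EP (S : CS p k) (j : ℕ) : ∃ x ∈ S.EP, (p : ERing p k) ^ j * x = 1 := by
  obtain ⟨x, hx, h⟩ := Rep.pinv S j
  refine ⟨x, (plus_iff h).2 ?_, hx⟩
  exact C_mem_supp _


theorem W_unit {a : WittVector p k} (h : ¬ (p : WittVector p k) ∣ a) : IsUnit a := by
  by_cases h0 : a = 0
  · exact absurd (h0 ▸ dvd_zero _) h
  obtain ⟨m, b, hb⟩ := WittVector.exists_eq_pow_p_mul' _ h0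
  have hm : m = 0 := by
    by_contra hm
    exact h (hb ▸ (dvd_pow_self _ hm).mul_right _)
  subst hm
  rw [pow_zero, one_mul] at hb
  rw [hb]
  exact b.isUnit

/-- extracting the content of a power series; supports do not grow -/
theorem ps_content {g : PowerSeries (WittVector p k)} (hg : g ≠ 0) :
    ∃ (i : ℕ) (g' : PowerSeries (WittVector p k)), g = PowerSeries.C ((p : WittVector p k) ^ i) * g' ∧
      ∃ n, ¬ (p : WittVector p k) ∣ PowerSeries.coeff n g' := by
  classical
  have h1 : ∃ i, ¬ ∀ n, (p : WittVector p k) ^ i ∣ PowerSeries.coeff n g := by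
    by_contra h
    push Not at h
    refine hg (PowerSeries.ext fun n => wK_inj p k ?_)
    rw [eq_zero_of_pow fun j => (norm_wK_iff _ _).2 (h j n)]
    simp
  obtain ⟨i, hi⟩ : ∃ i, Nat.find h1 = i + 1 := by
    refine Nat.exists_eq_succ_of_ne_zero fun h0 => ?_
    have := Nat.find_spec h1
    rw [h0] at this
    simp at this
  have h2 : ∀ n, (p : WittVector p k) ^ i ∣ PowerSeries.coeff n g := by
    by_contra h
    have := Nat.find_min' h1 h
    omega
  choose a ha using h2
  refine ⟨i, PowerSeries.mk a, PowerSeries.ext fun n => by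
    rw [PowerSeries.coeff_C_mul, PowerSeries.coeff_mk, ha], ?_⟩
  by_contra h
  push Not at h
  apply Nat.find_spec h1
  rw [hi]
  intro n
  rw [ha, pow_succ]
  have := h n
  rw [PowerSeries.coeff_mk] at this
  exact mul_dvd_mul_left _ this

theorem weier (g h : PowerSeries (WittVector p k)) (n : ℕ)
    (hn : ¬ (p : WittVector p k) ∣ PowerSeries.coeff n g)
    (hlt : ∀ m < n, (p : WittVector p k) ∣ PowerSeries.coeff m g) :
    ∃ Q r : PowerSeries (WittVector p k), h = g * Q + r ∧ ∀ m ≥ n, PowerSeries.coeff m r = 0 := by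
  set I := Ideal.span {(p : WittVector p k)}
  have hmk : ∀ m, PowerSeries.coeff m (g.map (Ideal.Quotient.mk I)) = 0 ↔
      (p : WittVector p k) ∣ PowerSeries.coeff m g := by
    intro m
    rw [PowerSeries.coeff_map, Ideal.Quotient.eq_zero_iff_mem, Ideal.mem_span_singleton]
  have ho : (g.map (Ideal.Quotient.mk I)).order = n := by
    rw [PowerSeries.order_eq_nat]
    exact ⟨fun h => hn ((hmk n).1 h), fun m hm => (hmk m).2 (hlt m hm)⟩
  have hW : g.IsWeierstrassDivisorAt I := by
    rw [PowerSeries.IsWeierstrassDivisorAt, ho]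
    exact W_unit hn
  have hd := hW.isWeierstrassDivisionAt_div_mod h
  refine ⟨_, _, hd.eq_mul_add, fun m hm => ?_⟩
  rw [Polynomial.coeff_coe]
  refine Polynomial.coeff_eq_zero_of_degree_lt (hd.degree_lt.trans_le ?_)
  rw [ho]
  exact_mod_cast hm

theorem isDomain_EP (S : CS p k) : IsDomain S.EP := by
  have := S.isDomain
  infer_instance

theorem psE_pC (i : ℕ) (g : PowerSeries (WittVector p k)) :
    psToE p k (PowerSeries.C ((p : WittVector p k) ^ i) * g) = (p : ERing p k) ^ i * psToE p k g := by
  rw [map_mul, psToE_C, map_pow, map_natCast]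

theorem pid_EP (S : CS p k) : IsPrincipalIdealRing S.EP := by
  classical
  have := S.isDomain_EP
  refine ⟨fun I => ?_⟩
  by_cases hI : I = ⊥
  · exact hI ▸ bot_isPrincipal
  -- dividing by p in I
  have hdiv : ∀ (x : S.EP) (j : ℕ), (p : S.EP) ^ j * x ∈ I → x ∈ I := by
    intro x j hx
    obtain ⟨y, hy, e⟩ := S.pinv_EP j
    have := I.mul_mem_left ⟨y, hy⟩ hx
    have e2 : (⟨y, hy⟩ : S.EP) * ((p : S.EP) ^ j * x) = x := by
      apply Subtype.ext
      push_cast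
      rw [← mul_assoc, mul_comm y, e, one_mul]
    rwa [e2] at this
  let ι : PowerSeries (WittVector p k) → S.EP := fun g => ⟨psToE p k g, psToE_mem g⟩
  have hιp : ∀ i g, ι (PowerSeries.C ((p : WittVector p k) ^ i) * g) = (p : S.EP) ^ i * ι g := by
    intro i g
    apply Subtype.ext
    push_cast
    exact psE_pC i g
  let Q : ℕ → Prop := fun n => ∃ g, ι g ∈ I ∧ ¬ (p : WittVector p k) ∣ PowerSeries.coeff n g
  have hQ : ∀ g, ι g ∈ I → g ≠ 0 → ∃ i g', g = PowerSeries.C ((p : WittVector p k) ^ i) * g' ∧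
      ι g' ∈ I ∧ ∃ n, ¬ (p : WittVector p k) ∣ PowerSeries.coeff n g' := by
    intro g hg h0
    obtain ⟨i, g', e, hn⟩ := ps_content h0
    refine ⟨i, g', e, hdiv _ i ?_, hn⟩
    rw [← hιp, ← e]; exact hg
  have hex : ∃ n, Q n := by
    obtain ⟨x, hx, hx0⟩ := Submodule.exists_mem_ne_zero_of_ne_bot hI
    obtain ⟨g, j, e⟩ := (x.2 : (x : ERing p k) ∈ EPlusSet p k)
    have e' : ι g = (p : S.EP) ^ j * x := by
      apply Subtype.ext
      push_cast
      exact e.symm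
    have hg0 : g ≠ 0 := by
      rintro rfl
      have h1 : (p : S.EP) ^ j * x = 0 := by
        rw [← e']; apply Subtype.ext; exact map_zero _
      rcases mul_eq_zero.1 h1 with h | h
      · obtain ⟨y, hy, ey⟩ := S.pinv_EP j
        have h2 : (1 : S.EP) = (p : S.EP) ^ j * ⟨y, hy⟩ := by
          apply Subtype.ext
          push_cast
          exact ey.symm
        rw [h, zero_mul] at h2
        exact one_ne_zero h2
      · exact hx0 h
    obtain ⟨i, g', -, hg', n, hn⟩ := hQ g (by rw [e']; exact I.mul_mem_left _ hx) hg0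
    exact ⟨n, g', hg', hn⟩
  obtain ⟨g, hgI, hgn⟩ := Nat.find_spec hex
  set n := Nat.find hex
  have hmin : ∀ m < n, ∀ h, ι h ∈ I → (p : WittVector p k) ∣ PowerSeries.coeff m h := by
    intro m hm h hh
    by_contra hnd
    exact Nat.find_min hex hm ⟨h, hh, hnd⟩
  have key : ∀ h, ι h ∈ I → ∃ q, h = g * q := by
    intro h hh
    obtain ⟨q, r, e, hr⟩ := weier g h n hgn (fun m hm => hmin m hm g hgI)
    refine ⟨q, ?_⟩
    have hrI : ι r ∈ I := by
      have e1 : ι r = ι h - ι g * ι q := by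
        apply Subtype.ext
        show psToE p k r = psToE p k h - psToE p k g * psToE p k q
        rw [e]; simp
      rw [e1]
      exact I.sub_mem hh (I.mul_mem_right _ hgI)
    by_cases hr0 : r = 0
    · rw [e, hr0, add_zero]
    exfalso
    obtain ⟨i, r', e2, hr', m, hm⟩ := hQ r hrI hr0
    by_cases hmn : m < n
    · exact hm (hmin m hmn r' hr')
    · have h1 := hr m (by omega)
      rw [e2, PowerSeries.coeff_C_mul] at h1
      have h2 := (mul_eq_zero.1 h1).resolve_left (pow_ne_zero _ p_neW)
      exact hm (h2 ▸ dvd_zero _)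
  refine ⟨ι g, ?_⟩
  refine le_antisymm (fun x hx => ?_) ((Ideal.span_singleton_le_iff_mem _).2 hgI)
  obtain ⟨h, j, e⟩ := (x.2 : (x : ERing p k) ∈ EPlusSet p k)
  have e' : ι h = (p : S.EP) ^ j * x := by
    apply Subtype.ext
    push_cast
    exact e.symm
  obtain ⟨q, hq⟩ := key h (by rw [e']; exact I.mul_mem_left _ hx)
  obtain ⟨y, hy, ey⟩ := S.pinv_EP j
  refine Ideal.mem_span_singleton'.2 ⟨⟨y, hy⟩ * ι q, ?_⟩
  apply Subtype.ext
  show y * psToE p k q * psToE p k g = x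
  have e3 : psToE p k g * psToE p k q = psToE p k h := by rw [hq, map_mul]
  calc _ = y * (psToE p k g * psToE p k q) := by ring
    _ = ((p : ERing p k) ^ j * y) * x := by rw [e3, ← e]; ring
    _ = x := by rw [ey, one_mul]

end CS
end Rob

set_option synthInstance.maxHeartbeats 1000000
namespace Rob
namespace CS
variable {p : ℕ} [hp : Fact p.Prime] {k : Type*} [Field k] [CharP k p] [PerfectRing k p]

/-- entrywise representation of matrices -/
def RepM (S : CS p k) {m n : ℕ} (X : Matrix (Fin m) (Fin n) (ERing p k))
    (Y : Matrix (Fin m) (Fin n) (Robba (KW p k))) : Prop := ∀ a b, S.Rep (X a b) (Y a b)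

variable {S : CS p k}

theorem RepM.mul {m n r : ℕ} {X : Matrix (Fin m) (Fin n) (ERing p k)}
    {X' : Matrix (Fin n) (Fin r) (ERing p k)} {Y : Matrix (Fin m) (Fin n) (Robba (KW p k))}
    {Y' : Matrix (Fin n) (Fin r) (Robba (KW p k))} (h : S.RepM X Y) (h' : S.RepM X' Y') :
    S.RepM (X * X') (Y * Y') := by
  intro a b
  rw [Matrix.mul_apply, Matrix.mul_apply]
  exact Rep.sum _ fun i => (h a i).mul (h' i b)

theorem RepM.unique {m n : ℕ} {X : Matrix (Fin m) (Fin n) (ERing p k)}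
    {Y Y' : Matrix (Fin m) (Fin n) (Robba (KW p k))} (h : S.RepM X Y) (h' : S.RepM X Y') : Y = Y' := by
  ext1 a b
  exact (h a b).unique (h' a b)

theorem RepM.inj {m n : ℕ} {X X' : Matrix (Fin m) (Fin n) (ERing p k)}
    {Y : Matrix (Fin m) (Fin n) (Robba (KW p k))} (h : S.RepM X Y) (h' : S.RepM X' Y) : X = X' := by
  ext1 a b
  exact (h a b).inj (h' a b)

theorem RepM.one {m : ℕ} : S.RepM (1 : Matrix (Fin m) (Fin m) (ERing p k)) 1 := by
  intro a b
  rw [Matrix.one_apply, Matrix.one_apply]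
  split_ifs
  · exact Rep.one
  · exact Rep.zero

theorem RepM.smul {m n : ℕ} {X : Matrix (Fin m) (Fin n) (ERing p k)}
    {Y : Matrix (Fin m) (Fin n) (Robba (KW p k))} {x : ERing p k} {y : Robba (KW p k)}
    (hx : S.Rep x y) (h : S.RepM X Y) : S.RepM (x • X) (y • Y) := by
  intro a b
  exact hx.mul (h a b)

theorem RepM.exists_of_dag {m n : ℕ} {X : Matrix (Fin m) (Fin n) (ERing p k)}
    (h : ∀ a b, X a b ∈ EDagSet p k S.co) : ∃ Y, S.RepM X Y := by
  choose Y hY using fun a b => exists_rep_of_dag (h a b)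
  exact ⟨Y, hY⟩

theorem exists_P {f q : ℕ} (hq : 2 ≤ q) {σ : ERing p k →+* ERing p k}
    (hσu : σ (uE p k) = uE p k ^ q) (hσO : ∀ a : WittVector p k,
      σ (wittToE p k a) = wittToE p k (((WittVector.frobenius : WittVector p k →+* WittVector p k) ^ f) a))
    (hσEp : Set.MapsTo σ (EPlusSet p k) (EPlusSet p k))
    (hσEd : Set.MapsTo σ (EDagSet p k S.co) (EDagSet p k S.co))
    {n l : ℕ} (Φ Ψ : Matrix (Fin n) (Fin n) (ERing p k))
    (hΦ : ∀ a b, Φ a b ∈ EPlusSet p k) (hΨ : ∀ a b, Ψ a b ∈ EPlusSet p k)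
    (h1 : Φ * Ψ = 1) (h2 : Ψ * Φ = 1)
    (V : Matrix (Fin n) (Fin l) (ERing p k)) (hV : ∀ a b, V a b ∈ EDagSet p k S.co)
    (L : Matrix (Fin l) (Fin n) (ERing p k)) (hL : ∀ a b, L a b ∈ EDagSet p k S.co)
    (hLV : L * V = 1)
    (A Ai : Matrix (Fin l) (Fin l) (ERing p k)) (hA : ∀ a b, A a b ∈ EDagSet p k S.co)
    (hAi : ∀ a b, Ai a b ∈ EDagSet p k S.co) (hAA : A * Ai = 1)
    (hVF : Φ * V.map σ = V * A) :
    ∃ (J : Fin l → Fin n) (P : Matrix (Fin n) (Fin l) (ERing p k)) (y : ERing p k),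
      y ≠ 0 ∧ y ∈ EPlusSet p k ∧ (∀ a b, P a b ∈ EPlusSet p k) ∧
      P.submatrix J id = y • 1 ∧ P * V.submatrix J id = y • V := by
  obtain ⟨Φr, rΦ⟩ := RepM.exists_of_dag (S := S) fun a b => plus_dag (hΦ a b)
  obtain ⟨Ψr, rΨ⟩ := RepM.exists_of_dag (S := S) fun a b => plus_dag (hΨ a b)
  obtain ⟨Vr, rV⟩ := RepM.exists_of_dag (S := S) hV
  obtain ⟨Lr, rL⟩ := RepM.exists_of_dag (S := S) hL
  obtain ⟨Ar, rA⟩ := RepM.exists_of_dag (S := S) hA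
  obtain ⟨Air, rAi⟩ := RepM.exists_of_dag (S := S) hAi
  have rVs : S.RepM (V.map σ) (Vr.map (sig (tauW p k f) q (norm_tauW f) hq)) := fun a b =>
    good_dag (hq := hq) hσu hσO hσEp hσEd (rV a b)
  obtain ⟨J, P, y, hy, hPs, hPb, hPJ, hPV⟩ := core (tauW p k f) q (norm_tauW f) hq Φr Ψr
    (fun a b => (plus_iff (rΦ a b)).1 (hΦ a b)) (fun a b => (plus_iff (rΨ a b)).1 (hΨ a b))
    (fun a b => (rΦ a b).bdd) (fun a b => (rΨ a b).bdd)
    (RepM.unique (h1 ▸ rΦ.mul rΨ) RepM.one) (RepM.unique (h2 ▸ rΨ.mul rΦ) RepM.one)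
    Vr (fun a b => (rV a b).bdd) Lr (RepM.unique (hLV ▸ rL.mul rV) RepM.one)
    Ar Air (RepM.unique (hAA ▸ rA.mul rAi) RepM.one)
    (RepM.unique (hVF ▸ rΦ.mul rVs) (rV.mul rA))
  choose P0 hP0 rP using fun a b => exists_rep_of_bdd (S := S) (hPb a b)
  have rP' : S.RepM (Matrix.of P0) P := rP
  have hP0' : ∀ a b, P0 a b ∈ EPlusSet p k := fun a b => (plus_iff (rP a b)).2 (hPs a b)
  rcases Nat.eq_zero_or_pos l with rfl | hl
  · refine ⟨J, Matrix.of P0, 1, ?_, (S.EP).one_mem, hP0', ?_, ?_⟩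
    · have := S.isDomain
      exact one_ne_zero
    · ext a; exact a.elim0
    · ext a b; exact b.elim0
  · let i0 : Fin l := ⟨0, hl⟩
    have ry : S.Rep (P0 (J i0) i0) y := by
      have := congrFun (congrFun hPJ i0) i0
      rw [Matrix.submatrix_apply, Matrix.smul_apply, Matrix.one_apply_eq, smul_eq_mul, mul_one,
        id] at this
      rw [← this]; exact rP _ _
    refine ⟨J, Matrix.of P0, P0 (J i0) i0, ?_, hP0' _ _, hP0', ?_, ?_⟩
    · intro h0
      rw [h0] at ry
      exact hy (ry.unique Rep.zero)
    · have r1 : S.RepM ((Matrix.of P0).submatrix J id) (P.submatrix J id) := fun a b => rP _ _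
      rw [hPJ] at r1
      exact r1.inj (RepM.one.smul ry)
    · have r1 : S.RepM (V.submatrix J id) (Vr.submatrix J id) := fun a b => rV _ _
      have r2 := rP'.mul r1
      rw [hPV] at r2
      exact r2.inj (rV.smul ry)

theorem exists_W (S : CS p k) {n l : ℕ} (J : Fin l → Fin n) (P : Matrix (Fin n) (Fin l) (ERing p k))
    (y : ERing p k) (hy : y ≠ 0) (hyp : y ∈ EPlusSet p k) (hP : ∀ a b, P a b ∈ EPlusSet p k)
    (hJ : P.submatrix J id = y • (1 : Matrix (Fin l) (Fin l) (ERing p k))) :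
    ∃ (W : Matrix (Fin n) (Fin l) (ERing p k)) (L : Matrix (Fin l) (Fin n) (ERing p k))
      (T : Matrix (Fin l) (Fin l) (ERing p k)),
      (∀ a b, W a b ∈ EPlusSet p k) ∧ (∀ a b, L a b ∈ EPlusSet p k) ∧ L * W = 1 ∧ P = W * T := by
  have := S.isDomain_EP
  have := S.pid_EP
  let P1 : Matrix (Fin n) (Fin l) S.EP := Matrix.of fun a b => ⟨P a b, hP a b⟩
  have hinj : Function.Injective S.EP.subtype := Subtype.val_injective
  obtain ⟨W, L, T, h1, h2⟩ := snf_lemma P1 J (⟨y, hyp⟩ : S.EP)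
    (fun h => hy (congrArg Subtype.val h)) (by
      ext a b
      have := congrFun (congrFun hJ a) b
      rw [Matrix.smul_apply, Matrix.one_apply] at this ⊢
      rw [show ((P1.submatrix J id a b : S.EP) : ERing p k) = P.submatrix J id a b from rfl, this]
      split_ifs <;> simp)
  refine ⟨W.map S.EP.subtype, L.map S.EP.subtype, T.map S.EP.subtype, fun a b => (W a b).2,
    fun a b => (L a b).2, ?_, ?_⟩
  · rw [← Matrix.map_mul, h1]; exact Matrix.map_one _ (map_zero _) (map_one _)
  · rw [← Matrix.map_mul, ← h2]; rfl

theorem mapd_mul {E : Type*} [CommRing E] (d : E →+ E)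
    (hd : ∀ a b, d (a * b) = a * d b + b * d a) {m n r : ℕ}
    (X : Matrix (Fin m) (Fin n) E) (Y : Matrix (Fin n) (Fin r) E) :
    (X * Y).map d = X.map d * Y + X * Y.map d := by
  ext a b
  simp only [Matrix.map_apply, Matrix.add_apply, Matrix.mul_apply, map_sum, hd,
    ← Finset.sum_add_distrib]
  refine Finset.sum_congr rfl fun i _ => ?_
  ring

end CS
end Rob

theorem statement6 (p : ℕ) [Fact p.Prime] (k : Type*) [Field k] [CharP k p]
    [PerfectRing k p]
    -- the coefficient structure on `Γ`:
    (coeff : ℤ → GammaRing p k →+ WittVector p k)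
    (hcoeff_laurent : ∀ (g : LaurentSeries (WittVector p k)) (i : ℤ),
      coeff i (laurentToGamma p k g) = g.coeff i)
    (hcoeff_inj : ∀ x : GammaRing p k, (∀ i, coeff i x = 0) → x = 0)
    (hcoeff_cont : ∀ (x y : GammaRing p k) (j : ℕ),
      (p : GammaRing p k) ^ j ∣ x - y →
        ∀ i, (p : WittVector p k) ^ j ∣ coeff i x - coeff i y)
    (hdense : ∀ (x : GammaRing p k) (j : ℕ), ∃ g : LaurentSeries (WittVector p k),
      (p : GammaRing p k) ^ j ∣ x - laurentToGamma p k g)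
    (hsurj : ∀ a : ℤ → WittVector p k,
      (∀ j : ℕ, ∃ N : ℤ, ∀ i ≤ N, (p : WittVector p k) ^ j ∣ a i) →
        ∃ x : GammaRing p k, ∀ i, coeff i x = a i)
    -- the Frobenius lift `σ` on `𝓔` (with `q = p^f`):
    (f : ℕ) (hf : 0 < f) (q : ℕ) (hq : q = p ^ f)
    (σ : ERing p k →+* ERing p k)
    (hσu : σ (uE p k) = uE p k ^ q)
    (hσO : ∀ a : WittVector p k,
      σ (wittToE p k a) = wittToE p k (((WittVector.frobenius : WittVector p k →+* WittVector p k) ^ f) a))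
    (hσEp : Set.MapsTo σ (EPlusSet p k) (EPlusSet p k))
    (hσEd : Set.MapsTo σ (EDagSet p k coeff) (EDagSet p k coeff))
    -- the derivation `d = d/du` on `𝓔`:
    (d : Derivation ℤ (ERing p k) (ERing p k))
    (hdu : d (uE p k) = 1)
    (hdO : ∀ a : WittVector p k, d (wittToE p k a) = 0)
    (hdEp : Set.MapsTo d (EPlusSet p k) (EPlusSet p k))
    (hdEd : Set.MapsTo d (EDagSet p k coeff) (EDagSet p k coeff))
    -- `c = dσ(u)/du = q·u^{q−1}`:
    (c : ERing p k) (hc : c = (q : ERing p k) * uE p k ^ (q - 1))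
    -- `M'`, a `(σ,∇)`-module over `𝓔_+` of rank `n`:
    (n : ℕ) (Φ' N' : Matrix (Fin n) (Fin n) (ERing p k))
    (hM'mem : (∀ i j, Φ' i j ∈ EPlusSet p k) ∧ (∀ i j, N' i j ∈ EPlusSet p k))
    (hM'F : ∃ (Ψ : Matrix (Fin n) (Fin n) (ERing p k)) (j : ℕ),
      (∀ a b, Ψ a b ∈ EPlusSet p k) ∧
      Φ' * Ψ = ((p : ERing p k) ^ j) • 1 ∧ Ψ * Φ' = ((p : ERing p k) ^ j) • 1)
    (hM'compat : Φ'.map ⇑d + N' * Φ' = c • (Φ' * N'.map ⇑σ))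
    -- `M`, a sub-`(σ,∇)`-module of `M'⊗_{𝓔_+}𝓔^†` of rank `l`, spanned by the
    -- columns of `V` (a matrix over `𝓔^†` of rank `l`):
    (l : ℕ) (V : Matrix (Fin n) (Fin l) (ERing p k))
    (hVmem : ∀ i j, V i j ∈ EDagSet p k coeff)
    (hVrank : ∃ Vli : Matrix (Fin l) (Fin n) (ERing p k),
      (∀ i j, Vli i j ∈ EDagSet p k coeff) ∧ Vli * V = 1)
    -- `M` is stable under `F` and the restriction of `F` is an isomorphism up to
    -- a power of `p`:
    (hVF : ∃ A : Matrix (Fin l) (Fin l) (ERing p k),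
      (∀ i j, A i j ∈ EDagSet p k coeff) ∧
      Φ' * V.map ⇑σ = V * A ∧
      ∃ (Ai : Matrix (Fin l) (Fin l) (ERing p k)) (j : ℕ),
        (∀ a b, Ai a b ∈ EDagSet p k coeff) ∧
        A * Ai = ((p : ERing p k) ^ j) • 1 ∧ Ai * A = ((p : ERing p k) ^ j) • 1)
    -- `M` is stable under `∇`:
    (hVnabla : ∃ C : Matrix (Fin l) (Fin l) (ERing p k),
      (∀ i j, C i j ∈ EDagSet p k coeff) ∧
      V.map ⇑d + N' * V = V * C) :
    -- Then there is a sub-`(σ,∇)`-module `M''` of `M'` over `𝓔_+`, spanned by the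
    -- columns of a matrix `W` over `𝓔_+`, with `M = M''⊗_{𝓔_+}𝓔^†`:
    ∃ W : Matrix (Fin n) (Fin l) (ERing p k),
      (∀ i j, W i j ∈ EPlusSet p k) ∧
      -- `W` and `V` have the same `𝓔^†`-column span:
      (∃ G Gi : Matrix (Fin l) (Fin l) (ERing p k),
        (∀ i j, G i j ∈ EDagSet p k coeff) ∧ (∀ i j, Gi i j ∈ EDagSet p k coeff) ∧
        G * Gi = 1 ∧ Gi * G = 1 ∧ V = W * G) ∧
      -- `M''` is stable under `F`, with `F` an isomorphism up to a power of `p`: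
      (∃ A₀ : Matrix (Fin l) (Fin l) (ERing p k),
        (∀ i j, A₀ i j ∈ EPlusSet p k) ∧
        Φ' * W.map ⇑σ = W * A₀ ∧
        ∃ (A₀i : Matrix (Fin l) (Fin l) (ERing p k)) (j : ℕ),
          (∀ a b, A₀i a b ∈ EPlusSet p k) ∧
          A₀ * A₀i = ((p : ERing p k) ^ j) • 1 ∧ A₀i * A₀ = ((p : ERing p k) ^ j) • 1) ∧
      -- `M''` is stable under `∇`:
      (∃ C₀ : Matrix (Fin l) (Fin l) (ERing p k),
        (∀ i j, C₀ i j ∈ EPlusSet p k) ∧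
        W.map ⇑d + N' * W = W * C₀) := by
    classical
  let S : Rob.CS p k := ⟨coeff, hcoeff_laurent, hcoeff_inj, hcoeff_cont, hdense, hsurj⟩
  have hq2 : 2 ≤ q := by
    rw [hq]
    exact (Fact.out : p.Prime).two_le.trans (Nat.le_self_pow hf.ne' p)
  obtain ⟨Ψ, j, hΨ, hΦΨ, hΨΦ⟩ := hM'F
  obtain ⟨Vli, hVli, hLV⟩ := hVrank
  obtain ⟨A, hA, hVA, Ai, j', hAi, hAAi, hAiA⟩ := hVF
  obtain ⟨C, hC, hVC⟩ := hVnabla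
  obtain ⟨hΦ, hN⟩ := hM'mem
  obtain ⟨x, hx, hxp⟩ := S.pinv_EP j
  obtain ⟨x', hx', hxp'⟩ := S.pinv_EP j'
  have hdom := S.isDomain
  obtain ⟨J, P, y, hy, hyp, hP, hPJ, hPV⟩ := Rob.CS.exists_P (S := S) hq2 hσu hσO hσEp hσEd
    Φ' (x • Ψ) hΦ (fun a b => S.EP.mul_mem hx (hΨ a b))
    (by rw [Matrix.mul_smul, hΦΨ, smul_smul, mul_comm, hxp, one_smul])
    (by rw [Matrix.smul_mul, hΨΦ, smul_smul, mul_comm, hxp, one_smul])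
    V hVmem Vli hVli hLV A (x' • Ai) hA
    (fun a b => S.ED.mul_mem (Rob.CS.plus_dag hx') (hAi a b))
    (by rw [Matrix.mul_smul, hAAi, smul_smul, mul_comm, hxp', one_smul]) hVA
  obtain ⟨W, Wli, T, hW, hWli, hWW, hPW⟩ := S.exists_W J P y hy hyp hP hPJ
  have dP : ∀ {m r : ℕ} {X : Matrix (Fin m) (Fin r) (ERing p k)},
      (∀ a b, X a b ∈ EPlusSet p k) → ∀ a b, X a b ∈ S.ED := fun h a b =>
    Rob.CS.plus_dag (h a b)
  -- `V` lies in the span of `W`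
  have hVW : V = W * (Wli * V) := by
    have e : y • V = y • (W * (Wli * V)) := by
      rw [← Matrix.mul_smul, ← Matrix.mul_smul, ← hPV, hPW, Matrix.mul_assoc W T,
        ← Matrix.mul_assoc Wli W, hWW, Matrix.one_mul]
    ext a b
    exact mul_left_cancel₀ hy (congrFun (congrFun e a) b)
  set G := Wli * V with hG
  set Gi := Vli * W with hGi
  have hGiG : Gi * G = 1 := by rw [hGi, Matrix.mul_assoc, ← hVW, hLV]
  have hGGi : G * Gi = 1 := mul_eq_one_comm.1 hGiG
  have hWV : W = V * Gi := by
    conv_rhs => rw [hVW, Matrix.mul_assoc, hGGi, Matrix.mul_one]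
  have proj : ∀ {r : ℕ} (X : Matrix (Fin n) (Fin r) (ERing p k)) (Z : Matrix (Fin l) (Fin r) (ERing p k)),
      X = W * Z → X = W * (Wli * X) := by
    intro r X Z h
    conv_rhs => rw [h, ← Matrix.mul_assoc Wli, hWW, Matrix.one_mul]
    exact h
  have hsW : ∀ a b, W.map σ a b ∈ S.EP := fun a b => hσEp (hW a b)
  have hsWli : ∀ a b, Wli.map σ a b ∈ S.EP := fun a b => hσEp (hWli a b)
  have hdW : ∀ a b, W.map d a b ∈ S.EP := fun a b => hdEp (hW a b)
  have hsWW : Wli.map σ * W.map σ = 1 := by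
    rw [← Matrix.map_mul, hWW]; exact Matrix.map_one _ (map_zero _) (map_one _)
  have hF : Φ' * W.map σ = W * (Wli * (Φ' * W.map σ)) := by
    refine proj _ (G * A * Gi.map σ) ?_
    conv_lhs => rw [hWV, Matrix.map_mul, ← Matrix.mul_assoc, hVA, hVW]
    simp only [Matrix.mul_assoc]
  have hNa : W.map d + N' * W = W * (Wli * (W.map d + N' * W)) := by
    refine proj _ ((G * C - G.map d) * Gi) ?_
    have e : (W.map d + N' * W) * G = W * (G * C - G.map d) := by
      have h1 : V.map d = W.map d * G + W * G.map d := by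
        conv_lhs => rw [hVW]
        exact Rob.CS.mapd_mul (⟨⟨⇑d, map_zero d⟩, map_add d⟩ : ERing p k →+ ERing p k)
          (fun a b => by simp [Derivation.leibniz]) W G
      rw [Matrix.mul_sub, ← Matrix.mul_assoc W G C, ← hVW, ← hVC, h1, Matrix.add_mul,
        Matrix.mul_assoc N' W G, ← hVW]
      abel
    rw [← Matrix.mul_assoc, ← e, Matrix.mul_assoc, hGGi, Matrix.mul_one]
  have hAi0 : (Wli.map σ * (Ψ * W)) * (Wli * (Φ' * W.map σ)) = ((p : ERing p k) ^ j) • 1 := by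
    rw [Matrix.mul_assoc, Matrix.mul_assoc Ψ, ← hF, ← Matrix.mul_assoc Ψ, hΨΦ, Matrix.smul_mul,
      Matrix.one_mul, Matrix.mul_smul, hsWW]
  have hAi1 : (Wli * (Φ' * W.map σ)) * (Wli.map σ * (Ψ * W)) = ((p : ERing p k) ^ j) • 1 := by
    have h1 : (x • (Wli.map σ * (Ψ * W))) * (Wli * (Φ' * W.map σ)) = 1 := by
      rw [Matrix.smul_mul, hAi0, smul_smul, mul_comm, hxp, one_smul]
    have h2 := mul_eq_one_comm.1 h1
    rw [Matrix.mul_smul] at h2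
    rw [← h2, smul_smul, hxp, one_smul]
  refine ⟨W, hW, ⟨G, Gi, Rob.mul_memM S.ED (dP hWli) hVmem, Rob.mul_memM S.ED hVli (dP hW), hGGi, hGiG, hVW⟩,
    ⟨Wli * (Φ' * W.map σ), Rob.mul_memM S.EP hWli (Rob.mul_memM S.EP hΦ hsW), hF,
      Wli.map σ * (Ψ * W), j, Rob.mul_memM S.EP hsWli (Rob.mul_memM S.EP hΨ hW), hAi1, hAi0⟩,
    ⟨Wli * (W.map d + N' * W), Rob.mul_memM S.EP hWli fun a b =>
      S.EP.add_mem (hdW a b) (Rob.mul_memM S.EP hN hW a b), hNa⟩⟩
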